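/- arXiv:1703.07979 — 6 statements merged into one kernel-verified Lean document; each statement's English description precedes it below -/
import Mathlib

section
/- For every integer m ≥ 1 and every b > 0, the limit as ε → 0⁺ of [∫_ε^∞ e^{-bx} x^{-m} dx − (Σ_{k=0}^{m-2} (-b)^k/(k! (m-k-1) ε^{m-k-1}) − ((-b)^{m-1}/(m-1)!) ln ε)] exists and equals ((-1)^m b^{m-1}/(m-1)!) (ln b − H_{m-1} + γ), where H_{m-1} = Σ_{j=1}^{m-1} 1/j is the (m−1)-st harmonic number (H_0 = 0) and γ is the Euler–Mascheroni constant. -/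
open Filter MeasureTheory Set

theorem integrableOn_exp_neg_mul_div_pow (m : ℕ) {b ε : ℝ} (hb : 0 < b) (hε : 0 < ε) :
    IntegrableOn (fun x : ℝ => Real.exp (-b * x) / x ^ m) (Ioi ε) := by
  have hmeas : AEStronglyMeasurable (fun x : ℝ => Real.exp (-b * x) / x ^ m)
      (volume.restrict (Ioi ε)) := by
    refine Measurable.aestronglyMeasurable ?_
    fun_prop
  refine Integrable.mono' ((exp_neg_integrableOn_Ioi ε hb).div_const (ε ^ m)) hmeas ?_
  filter_upwards [ae_restrict_mem measurableSet_Ioi] with x hx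
  have hx' : ε < x := hx
  have : 0 < x := hε.trans hx'
  rw [Real.norm_of_nonneg (by positivity)]
  gcongr

theorem integral_exp_neg_mul_div_pow_succ {m : ℕ} (hm : 1 ≤ m) {b ε : ℝ} (hb : 0 < b)
    (hε : 0 < ε) :
    ∫ x in Ioi ε, Real.exp (-b * x) / x ^ (m + 1) =
      Real.exp (-b * ε) / (m * ε ^ m) - b / m * ∫ x in Ioi ε, Real.exp (-b * x) / x ^ m := by
  have hm0 : (m : ℝ) ≠ 0 := by positivity
  have h1 := (integrableOn_exp_neg_mul_div_pow m hb hε).const_mul (-b)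
  have h2 := (integrableOn_exp_neg_mul_div_pow (m + 1) hb hε).const_mul (m : ℝ)
  have hderiv : ∀ x ∈ Ici ε, HasDerivAt (fun x : ℝ => Real.exp (-b * x) / x ^ m)
      (-b * (Real.exp (-b * x) / x ^ m) - m * (Real.exp (-b * x) / x ^ (m + 1))) x := by
    intro x hx
    have hx0 : x ≠ 0 := (hε.trans_le hx).ne'
    have h := (((hasDerivAt_id x).const_mul (-b)).exp).div (hasDerivAt_pow m x) (pow_ne_zero m hx0)
    refine h.congr_deriv ?_
    obtain ⟨k, rfl⟩ := Nat.exists_eq_add_of_le' hm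
    simp only [id, Nat.add_sub_cancel]
    field_simp
    ring
  have hlim : Tendsto (fun x : ℝ => Real.exp (-b * x) / x ^ m) atTop (nhds 0) := by
    have hexp : Tendsto (fun x : ℝ => Real.exp (-b * x)) atTop (nhds 0) :=
      Real.tendsto_exp_atBot.comp (tendsto_id.const_mul_atTop_of_neg (neg_neg_iff_pos.2 hb))
    exact hexp.div_atTop (tendsto_pow_atTop (by omega))
  have key := integral_Ioi_of_hasDerivAt_of_tendsto' hderiv (h1.sub h2) hlim
  rw [integral_sub h1 h2, integral_const_mul, integral_const_mul] at key
  field_simp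
  field_simp at key
  linarith

theorem integral_log_mul_exp_neg :
    ∫ x in Ioi (0 : ℝ), Real.log x * Real.exp (-x) = -Real.eulerMascheroniConstant := by
  have h1 := Complex.hasDerivAt_GammaIntegral (s := 1) (by simp)
  have h2 : HasDerivAt Complex.GammaIntegral (-Real.eulerMascheroniConstant : ℂ) 1 := by
    refine Complex.hasDerivAt_Gamma_one.congr_of_eventuallyEq ?_
    have : IsOpen {s : ℂ | 0 < s.re} := Complex.continuous_re.isOpen_preimage _ isOpen_Ioi
    filter_upwards [this.mem_nhds (by simp : (1 : ℂ) ∈ {s : ℂ | 0 < s.re})] with a ha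
    exact (Complex.Gamma_eq_integral ha).symm
  have h3 := h1.unique h2
  simp only [sub_self, Complex.cpow_zero, one_mul] at h3
  have h4 : ((∫ x in Ioi (0 : ℝ), Real.log x * Real.exp (-x) : ℝ) : ℂ) =
      ((-Real.eulerMascheroniConstant : ℝ) : ℂ) := by
    rw [← integral_complex_ofReal]
    push_cast at h3 ⊢
    exact h3
  exact_mod_cast h4

theorem integrableOn_log_mul_exp_neg :
    IntegrableOn (fun x : ℝ => Real.log x * Real.exp (-x)) (Ioi 0) := by
  refine Integrable.of_integral_ne_zero ?_
  rw [integral_log_mul_exp_neg]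
  linarith [Real.one_half_lt_eulerMascheroniConstant]

theorem integral_exp_neg_div_Ioi {ε : ℝ} (hε : 0 < ε) :
    ∫ x in Ioi ε, Real.exp (-x) / x =
      (∫ x in Ioi ε, Real.log x * Real.exp (-x)) - Real.log ε * Real.exp (-ε) := by
  have h1 : IntegrableOn (fun x : ℝ => Real.exp (-x) / x) (Ioi ε) := by
    simpa using integrableOn_exp_neg_mul_div_pow 1 one_pos hε
  have h2 := integrableOn_log_mul_exp_neg.mono_set (Ioi_subset_Ioi hε.le)
  have hderiv : ∀ x ∈ Ici ε, HasDerivAt (fun x : ℝ => Real.log x * Real.exp (-x))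
      (Real.exp (-x) / x - Real.log x * Real.exp (-x)) x := by
    intro x hx
    have h := (Real.hasDerivAt_log (hε.trans_le hx).ne').mul (hasDerivAt_neg x).exp
    refine h.congr_deriv ?_
    ring
  have hlim : Tendsto (fun x : ℝ => Real.log x * Real.exp (-x)) atTop (nhds 0) := by
    refine tendsto_of_tendsto_of_tendsto_of_le_of_le' tendsto_const_nhds
      (Real.tendsto_pow_mul_exp_neg_atTop_nhds_zero 1) ?_ ?_ <;>
    filter_upwards [eventually_ge_atTop 1] with x hx
    · exact mul_nonneg (Real.log_nonneg hx) (Real.exp_pos _).le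
    · rw [pow_one]
      gcongr
      exact Real.log_le_self (by linarith)
  have key := integral_Ioi_of_hasDerivAt_of_tendsto' hderiv (h1.sub h2) hlim
  rw [integral_sub h1 h2] at key
  linarith

theorem tendsto_integral_exp_neg_div_add_log :
    Tendsto (fun ε : ℝ => (∫ x in Ioi ε, Real.exp (-x) / x) + Real.log ε)
      (nhdsWithin 0 (Ioi 0)) (nhds (-Real.eulerMascheroniConstant)) := by
  have hint : Tendsto (fun ε : ℝ => ∫ x in Ioi ε, Real.log x * Real.exp (-x))
      (nhdsWithin 0 (Ioi 0)) (nhds (-Real.eulerMascheroniConstant)) := by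
    rw [← integral_log_mul_exp_neg]
    have hcover : AECover (volume.restrict (Ioi (0 : ℝ))) (nhdsWithin 0 (Ioi 0))
        (fun ε : ℝ => Ioi ε) := aecover_Ioi_of_Ioi (tendsto_id.mono_left nhdsWithin_le_nhds)
    refine (hcover.integral_tendsto_of_countably_generated integrableOn_log_mul_exp_neg).congr' ?_
    filter_upwards [self_mem_nhdsWithin] with ε hε
    rw [Measure.restrict_restrict measurableSet_Ioi,
      inter_eq_left.2 (Ioi_subset_Ioi (le_of_lt hε))]
  have hlog : Tendsto (fun ε : ℝ => Real.log ε * (1 - Real.exp (-ε)))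
      (nhdsWithin 0 (Ioi 0)) (nhds 0) := by
    have h := (tendsto_log_mul_rpow_nhdsGT_zero one_pos).norm
    simp only [Real.rpow_one, norm_zero] at h
    refine squeeze_zero_norm' ?_ h
    filter_upwards [self_mem_nhdsWithin] with ε hε
    have hε' : (0 : ℝ) < ε := hε
    rw [norm_mul, norm_mul]
    gcongr
    have h1 : Real.exp (-ε) ≤ 1 := Real.exp_le_one_iff.2 (by linarith)
    rw [Real.norm_of_nonneg (by linarith), Real.norm_of_nonneg hε'.le]
    linarith [Real.add_one_le_exp (-ε)]
  have h := hint.add hlog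
  rw [add_zero] at h
  refine h.congr' ?_
  filter_upwards [self_mem_nhdsWithin] with ε hε
  rw [integral_exp_neg_div_Ioi hε]
  ring

theorem tendsto_integral_exp_neg_mul_div_add_log {b : ℝ} (hb : 0 < b) :
    Tendsto (fun ε : ℝ => (∫ x in Ioi ε, Real.exp (-b * x) / x) + Real.log ε)
      (nhdsWithin 0 (Ioi 0)) (nhds (-Real.eulerMascheroniConstant - Real.log b)) := by
  have hscale : Tendsto (fun ε : ℝ => b * ε) (nhdsWithin 0 (Ioi 0)) (nhdsWithin 0 (Ioi 0)) := by
    refine tendsto_nhdsWithin_iff.2 ⟨?_, ?_⟩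
    · exact ((continuous_const_mul b).tendsto' 0 0 (mul_zero b)).mono_left nhdsWithin_le_nhds
    · filter_upwards [self_mem_nhdsWithin] with ε hε
      exact mul_pos hb hε
  refine ((tendsto_integral_exp_neg_div_add_log.comp hscale).sub_const (Real.log b)).congr' ?_
  filter_upwards [self_mem_nhdsWithin] with ε hε
  have hε' : (0 : ℝ) < ε := hε
  have h := integral_comp_mul_left_Ioi' (fun x : ℝ => Real.exp (-x) / x) ε hb
  have hint : b • ∫ x in Ioi ε, Real.exp (-(b * x)) / (b * x) =
      ∫ x in Ioi ε, Real.exp (-b * x) / x := by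
    rw [smul_eq_mul, ← integral_const_mul]
    congr 1 with x
    rw [neg_mul]
    field_simp
  simp only [Function.comp_apply]
  rw [← hint, h, Real.log_mul hb.ne' hε'.ne']
  ring

theorem tendsto_exp_sub_sum_range_div_pow (c : ℝ) (m : ℕ) :
    Tendsto (fun ε : ℝ => (Real.exp (c * ε) -
        ∑ k ∈ Finset.range m, c ^ k / Nat.factorial k * ε ^ k) / ε ^ m)
      (nhdsWithin 0 (Ioi 0)) (nhds (c ^ m / Nat.factorial m)) := by
  have h0 : Tendsto (fun ε : ℝ => c * ε) (nhdsWithin 0 (Ioi 0)) (nhds 0) :=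
    ((continuous_const_mul c).tendsto' 0 0 (mul_zero c)).mono_left nhdsWithin_le_nhds
  have h1 := (Real.exp_sub_sum_range_succ_isLittleO_pow m).comp_tendsto h0
  have h2 : (fun ε : ℝ => (c * ε) ^ m) =O[nhdsWithin 0 (Ioi 0)] (fun ε : ℝ => ε ^ m) := by
    simp_rw [mul_pow]
    exact Asymptotics.isBigO_const_mul_self _ _ _
  have h3 := ((h1.trans_isBigO h2).tendsto_div_nhds_zero).add_const (c ^ m / Nat.factorial m)
  rw [zero_add] at h3
  refine h3.congr' ?_
  filter_upwards [self_mem_nhdsWithin] with ε hε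
  have hε' : (0 : ℝ) < ε := hε
  simp only [Function.comp_apply, Finset.sum_range_succ, mul_pow, mul_div_right_comm]
  field_simp
  ring

/-- The divergent parts for consecutive exponents differ by a Taylor polynomial of `e^{-bε}`. -/
theorem sum_divergent_part_succ {m : ℕ} (hm : 1 ≤ m) (b : ℝ) {ε : ℝ} (hε : 0 < ε) :
    ∑ k ∈ Finset.range m, (-b) ^ k / (Nat.factorial k * (((m + 1 - k - 1 : ℕ) : ℝ) *
        ε ^ (m + 1 - k - 1))) =
      (∑ k ∈ Finset.range m, (-b) ^ k / Nat.factorial k * ε ^ k) / (m * ε ^ m) -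
        b / m * ∑ k ∈ Finset.range (m - 1), (-b) ^ k / (Nat.factorial k *
          (((m - k - 1 : ℕ) : ℝ) * ε ^ (m - k - 1))) := by
  obtain ⟨n, rfl⟩ := Nat.exists_eq_add_of_le' hm
  have hshift : -(b / ((n + 1 : ℕ) : ℝ)) * ∑ k ∈ Finset.range (n + 1 - 1),
      (-b) ^ k / (Nat.factorial k * (((n + 1 - k - 1 : ℕ) : ℝ) * ε ^ (n + 1 - k - 1))) =
      ∑ k ∈ Finset.range (n + 1), (k : ℝ) / ((n + 1 : ℕ) : ℝ) * ((-b) ^ k /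
        (Nat.factorial k * (((n + 1 + 1 - k - 1 : ℕ) : ℝ) * ε ^ (n + 1 + 1 - k - 1)))) := by
    rw [Finset.sum_range_succ', Finset.mul_sum, Nat.add_sub_cancel]
    simp only [Nat.cast_zero, zero_div, zero_mul, add_zero]
    refine Finset.sum_congr rfl fun k hk => ?_
    have hk' : k < n := Finset.mem_range.1 hk
    obtain ⟨d, rfl⟩ := Nat.exists_eq_add_of_lt hk'
    rw [show k + d + 1 + 1 - k - 1 = d + 1 by omega,
      show k + d + 1 + 1 + 1 - (k + 1) - 1 = d + 1 by omega, Nat.factorial_succ]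
    push_cast
    field_simp
    ring
  rw [sub_eq_add_neg, ← neg_mul, hshift, Finset.sum_div, ← Finset.sum_add_distrib]
  refine Finset.sum_congr rfl fun k hk => ?_
  have hk' : k < n + 1 := Finset.mem_range.1 hk
  obtain ⟨d, hd⟩ := Nat.exists_eq_add_of_lt hk'
  obtain rfl : n = k + d := by omega
  rw [show k + d + 1 + 1 - k - 1 = d + 1 by omega]
  push_cast
  field_simp
  ring

/-- Finite part of `∫_0^∞ e^{-bx}/x^m dx`: the regularized limit exists and equals
`((-1)^m b^{m-1}/(m-1)!)(ln b − H_{m-1} + γ)`. -/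
theorem stmt_4 (m : ℕ) (hm : 1 ≤ m) (b : ℝ) (hb : 0 < b) :
    Tendsto
      (fun ε : ℝ =>
        (∫ x in Set.Ioi ε, Real.exp (-b * x) / x ^ m) -
          ((∑ k ∈ Finset.range (m - 1),
              (-b) ^ k / (Nat.factorial k *
                (((m - k - 1 : ℕ) : ℝ) * ε ^ (m - k - 1)))) -
            ((-b) ^ (m - 1) / Nat.factorial (m - 1)) * Real.log ε))
      (nhdsWithin 0 (Set.Ioi 0))
      (nhds (((-1 : ℝ) ^ m * b ^ (m - 1) / Nat.factorial (m - 1)) *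
        (Real.log b - (∑ j ∈ Finset.range (m - 1), (1 : ℝ) / (j + 1)) +
          Real.eulerMascheroniConstant))) := by
  induction m, hm using Nat.le_induction with
  | base =>
    convert tendsto_integral_exp_neg_mul_div_add_log hb using 2
    · simp
    · simp
      ring
  | succ m hm ih =>
    have hm0 : (m : ℝ) ≠ 0 := by positivity
    have hfact : (Nat.factorial m : ℝ) = m * Nat.factorial (m - 1) := by
      exact_mod_cast (Nat.mul_factorial_pred (by omega)).symm
    have hpow (c : ℝ) : c ^ m = c * c ^ (m - 1) := (mul_pow_sub_one (by omega) c).symm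
    have h := (ih.const_mul (-(b / m))).add
      ((tendsto_exp_sub_sum_range_div_pow (-b) m).div_const (m : ℝ))
    refine (h.congr' ?_).trans (le_of_eq (congrArg nhds ?_))
    · filter_upwards [self_mem_nhdsWithin] with ε hε
      have hε' : (0 : ℝ) < ε := hε
      rw [integral_exp_neg_mul_div_pow_succ hm hb hε, Nat.add_sub_cancel,
        sum_divergent_part_succ hm b hε, hfact, hpow (-b)]
      field_simp
      ring
    · obtain ⟨n, rfl⟩ := Nat.exists_eq_add_of_le' hm
      simp only [Nat.add_sub_cancel] at hfact ⊢
      rw [hfact, Finset.sum_range_succ, neg_pow b]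
      push_cast at hm0 ⊢
      field_simp
      ring
end

section
/- Let F : ℂ → ℂ be entire with F real-valued on the real axis, let f be its restriction to ℝ, and let 0 < ω < a. Then ∫_0^a f(x)/(ω + x) dx = (1/(2π)) ∫_0^{2π} F(a e^{iθ}) (ln a + iθ) (a e^{iθ}/(ω + a e^{iθ})) dθ − F(-ω) (ln ω + iπ); in particular the right-hand side is real. -/
open Filter MeasureTheory Set Complex

/-- Mean value property over the standard parametrization of a circle about the origin. -/
lemma integral_comp_mul_exp_of_differentiableOn {h : ℂ → ℂ} {R : ℝ} (hR : 0 ≤ R)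
    (hh : DifferentiableOn ℂ h (Metric.closedBall 0 R)) :
    ∫ θ in (0 : ℝ)..(2 * Real.pi), h (R * exp (θ * I)) = 2 * Real.pi * h 0 := by
  have hd : DiffContOnCl ℂ h (Metric.ball 0 |R|) := by
    rw [abs_of_nonneg hR]
    exact hh.diffContOnCl_ball subset_rfl
  have key := hd.circleAverage
  rw [Real.circleAverage_def] at key
  simp only [circleMap, zero_add] at key
  rw [← key, real_smul]
  push_cast
  rw [← mul_assoc, mul_inv_cancel₀ (by exact_mod_cast Real.two_pi_pos.ne'), one_mul]

/-- Same mean value property, with the circle traversed clockwise. -/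
lemma integral_comp_mul_exp_neg_of_differentiableOn {h : ℂ → ℂ} {R : ℝ} (hR : 0 ≤ R)
    (hh : DifferentiableOn ℂ h (Metric.closedBall 0 R)) :
    ∫ θ in (0 : ℝ)..(2 * Real.pi), h (R * exp (-(θ * I))) = 2 * Real.pi * h 0 := by
  rw [← integral_comp_mul_exp_of_differentiableOn hR hh]
  have := intervalIntegral.integral_comp_sub_left (a := 0) (b := 2 * Real.pi)
    (fun θ : ℝ ↦ h (R * exp (θ * I))) (2 * Real.pi)
  simp only [sub_self, sub_zero] at this
  rw [← this]
  refine intervalIntegral.integral_congr fun θ _ ↦ ?_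
  have : ((2 * Real.pi - θ : ℝ) : ℂ) * I = 2 * Real.pi * I + -(θ * I) := by push_cast; ring
  simp only [this, exp_add, exp_two_pi_mul_I, one_mul]

/-- Dividing an entire function by `z - c`, the quotient has an entire primitive. -/
lemma exists_primitive_dslope {F : ℂ → ℂ} (hF : Differentiable ℂ F) (c : ℂ) :
    ∃ G H : ℂ → ℂ, (∀ z, HasDerivAt H (G z) z) ∧
      ∀ z, F z = F c + (z - c) * G z := by
  have hG : Differentiable ℂ (dslope F c) := by
    rw [← differentiableOn_univ, differentiableOn_dslope univ_mem]
    exact hF.differentiableOn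
  obtain ⟨H, hH⟩ := hG.isExactOn_univ
  refine ⟨dslope F c, H, fun z ↦ hH z (mem_univ z), fun z ↦ ?_⟩
  have := sub_smul_dslope F c z
  rw [smul_eq_mul] at this
  rw [this]; ring

lemma norm_mul_exp_neg_mul_I {r : ℝ} (hr : 0 ≤ r) (θ : ℝ) : ‖(r : ℂ) * exp (-(θ * I))‖ = r := by
  have : (-(θ * I) : ℂ) = ((-θ : ℝ) : ℂ) * I := by push_cast; ring
  rw [norm_mul, this, norm_exp_ofReal_mul_I, mul_one, norm_real, Real.norm_of_nonneg hr]

/-- Contour integral representation of the incomplete Stieltjes transform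
`∫_0^a f(x)/(ω+x) dx` for an entire `F` real on the real axis, `0 < ω < a`. -/
theorem stmt_8 (F : ℂ → ℂ) (hF : Differentiable ℂ F)
    (hreal : ∀ x : ℝ, (F x).im = 0)
    (f : ℝ → ℝ) (hf : ∀ x : ℝ, f x = (F x).re)
    (ω a : ℝ) (hω : 0 < ω) (ha : ω < a) :
    ((∫ x in (0 : ℝ)..a, f x / (ω + x) : ℝ) : ℂ) =
      (1 / (2 * (Real.pi : ℂ))) *
        (∫ θ in (0 : ℝ)..(2 * Real.pi),
          F ((a : ℂ) * Complex.exp ((θ : ℂ) * Complex.I)) *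
            ((Real.log a : ℂ) + Complex.I * (θ : ℂ)) *
            ((a : ℂ) * Complex.exp ((θ : ℂ) * Complex.I) /
              ((ω : ℂ) + (a : ℂ) * Complex.exp ((θ : ℂ) * Complex.I)))) -
      F (-(ω : ℂ)) * ((Real.log ω : ℂ) + (Real.pi : ℂ) * Complex.I) := by
  obtain ⟨G, H, hH, hFG⟩ := exists_primitive_dslope hF (-(ω : ℂ))
  set C := F (-(ω : ℂ))
  have ha0 : 0 < a := hω.trans ha
  have haC : (a : ℂ) ≠ 0 := by exact_mod_cast ha0.ne'
  have hHd : Differentiable ℂ H := fun z ↦ (hH z).differentiableAt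
  have hlhs : ((∫ x in (0 : ℝ)..a, f x / (ω + x) : ℝ) : ℂ) =
      H a - H 0 + C * (Real.log (ω + a) - Real.log ω) := by
    rw [← intervalIntegral.integral_ofReal]
    have hpos : ∀ x ∈ uIcc 0 a, 0 < ω + x := fun x hx ↦ by
      rw [uIcc_of_le ha0.le] at hx; linarith [hx.1]
    have hderiv : ∀ x ∈ uIcc 0 a, HasDerivAt
        (fun x : ℝ ↦ H x + C * (Real.log (ω + x) : ℂ)) ((f x / (ω + x) : ℝ) : ℂ) x := by
      intro x hx
      have h1 : HasDerivAt (fun x : ℝ ↦ Real.log (ω + x)) (1 / (ω + x)) x :=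
        ((hasDerivAt_id x).const_add ω).log (hpos x hx).ne'
      convert! (hH x).comp_ofReal.add (h1.ofReal_comp.const_mul C) using 1
      have h2 : (f x : ℂ) = F x := by
        rw [hf]; exact Complex.ext (by simp) (by simp [hreal])
      have h3 : (ω + x : ℂ) ≠ 0 := by exact_mod_cast (hpos x hx).ne'
      push_cast
      rw [h2, hFG x]
      field_simp
      ring
    rw [intervalIntegral.integral_eq_sub_of_hasDerivAt hderiv]
    · simp; ring
    · refine ContinuousOn.intervalIntegrable ?_
      have hfc : Continuous f := by
        rw [funext hf]
        exact continuous_re.comp (hF.continuous.comp continuous_ofReal)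
      refine continuous_ofReal.comp_continuousOn (hfc.continuousOn.div (by fun_prop) ?_)
      exact fun x hx ↦ (hpos x hx).ne'
  set r := ω / a with hr
  have hr0 : 0 ≤ r := (div_pos hω ha0).le
  have hr1 : r < 1 := (div_lt_one ha0).2 ha
  have hlog : Real.log (ω + a) = Real.log a + Real.log (1 + r) := by
    rw [← Real.log_mul ha0.ne' (by positivity)]
    congr 1
    rw [hr]; field_simp; ring
  let L : ℝ → ℂ := fun θ ↦ log (1 + r * exp (-(θ * I)))
  let W : ℝ → ℂ := fun θ ↦ H (a * exp (θ * I)) + C * (I * θ + L θ)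
  have hslit : ∀ θ : ℝ, 1 + r * exp (-(θ * I)) ∈ slitPlane := fun θ ↦
    mem_slitPlane_of_norm_lt_one (by rwa [norm_mul_exp_neg_mul_I hr0])
  have hden : ∀ θ : ℝ, (ω : ℂ) + a * exp (θ * I) ≠ 0 := by
    intro θ h0
    have h1 : ‖(a : ℂ) * exp (θ * I)‖ = a := by
      rw [norm_mul, norm_exp_ofReal_mul_I, mul_one, norm_real, Real.norm_of_nonneg ha0.le]
    rw [← neg_eq_of_add_eq_zero_right h0, norm_neg, norm_real, Real.norm_of_nonneg hω.le] at h1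
    exact ha.ne h1
  let w : ℝ → ℂ := fun θ ↦ F (a * exp (θ * I)) * (a * exp (θ * I) / (ω + a * exp (θ * I)))
  have hLd : ∀ θ : ℝ, HasDerivAt L
      (r * (exp (-(θ * I)) * -I) / (1 + r * exp (-(θ * I)))) θ := by
    intro θ
    have h1 : HasDerivAt (fun z : ℂ ↦ -(z * I)) (-I) (θ : ℂ) := by
      simpa using! ((hasDerivAt_id (θ : ℂ)).mul_const I).neg
    exact ((h1.cexp.const_mul (r : ℂ)).const_add 1).comp_ofReal.clog_real (hslit θ)
  have hed : ∀ θ : ℝ, HasDerivAt (fun z : ℂ ↦ (a : ℂ) * exp (z * I))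
      (a * (exp (θ * I) * I)) θ := by
    intro θ
    have h1 : HasDerivAt (fun z : ℂ ↦ z * I) I (θ : ℂ) := by
      simpa using (hasDerivAt_id (θ : ℂ)).mul_const I
    exact h1.cexp.const_mul (a : ℂ)
  have hId : ∀ θ : ℝ, HasDerivAt (fun x : ℝ ↦ I * (x : ℂ)) I θ := fun θ ↦ by
    simpa using ((hasDerivAt_id (θ : ℂ)).const_mul I).comp_ofReal
  have hWd : ∀ θ : ℝ, HasDerivAt W (I * w θ) θ := by
    intro θ
    have h1 := ((hH (a * exp (θ * I))).comp (θ : ℂ) (hed θ)).comp_ofReal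
    have h2 := h1.add (((hId θ).add (hLd θ)).const_mul C)
    convert! h2 using 1
    have hd := hden θ
    have hs := slitPlane_ne_zero (hslit θ)
    have he := exp_ne_zero (θ * I)
    have hra : (r : ℂ) = ω / a := by rw [hr]; push_cast; rfl
    have hs' : (1 : ℂ) + r * exp (-(θ * I)) = (ω + a * exp (θ * I)) / (a * exp (θ * I)) := by
      rw [hra, exp_neg]; field_simp; ring
    simp only [w]
    rw [hs', hFG, hra, exp_neg]
    generalize exp (θ * I) = e at *
    field_simp
    ring
  have hW : Continuous W := continuous_iff_continuousAt.2 fun θ ↦ (hWd θ).continuousAt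
  have hL : Continuous L := continuous_iff_continuousAt.2 fun θ ↦ (hLd θ).continuousAt
  have hw : Continuous w := by
    refine (hF.continuous.comp (by fun_prop)).mul (Continuous.div (by fun_prop) (by fun_prop) hden)
  have hintW : ∫ θ in (0 : ℝ)..(2 * Real.pi), W θ =
      2 * Real.pi * H 0 + C * (I * (2 * Real.pi ^ 2)) := by
    have hL0 : ∫ θ in (0 : ℝ)..(2 * Real.pi), L θ = 0 := by
      have := integral_comp_mul_exp_neg_of_differentiableOn (h := fun z ↦ log (1 + z)) hr0
        fun z hz ↦ by
          refine DifferentiableAt.differentiableWithinAt (DifferentiableAt.clog (by fun_prop) ?_)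
          exact mem_slitPlane_of_norm_lt_one ((mem_closedBall_zero_iff.1 hz).trans_lt hr1)
      simpa using this
    have hθ : ∫ θ in (0 : ℝ)..(2 * Real.pi), (θ : ℂ) = 2 * Real.pi ^ 2 := by
      rw [intervalIntegral.integral_ofReal, integral_id]
      push_cast; ring
    have hHc := hHd.continuous
    rw [intervalIntegral.integral_add, intervalIntegral.integral_const_mul,
      intervalIntegral.integral_add, intervalIntegral.integral_const_mul, hL0, hθ,
      integral_comp_mul_exp_of_differentiableOn ha0.le hHd.differentiableOn, add_zero]
    all_goals exact Continuous.intervalIntegrable (by fun_prop) _ _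
  have hparts := intervalIntegral.integral_mul_deriv_eq_deriv_mul (a := 0) (b := 2 * Real.pi)
    (u := fun θ : ℝ ↦ (Real.log a : ℂ) + I * θ) (u' := fun _ ↦ I) (v := W) (v' := fun θ ↦ I * w θ)
    (fun θ _ ↦ (hId θ).const_add _) (fun θ _ ↦ hWd θ)
    (Continuous.intervalIntegrable (by fun_prop) _ _)
    (Continuous.intervalIntegrable (by fun_prop) _ _)
  have hrhs : ∫ θ in (0 : ℝ)..(2 * Real.pi), ((Real.log a : ℂ) + I * θ) * (I * w θ) =
      I * ∫ θ in (0 : ℝ)..(2 * Real.pi), F (a * exp (θ * I)) * ((Real.log a : ℂ) + I * θ) *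
        (a * exp (θ * I) / (ω + a * exp (θ * I))) := by
    rw [← intervalIntegral.integral_const_mul]
    refine intervalIntegral.integral_congr fun θ _ ↦ ?_
    simp only [w]; ring
  have hlr : log (1 + r : ℂ) = Real.log (1 + r) := by
    rw [ofReal_log (by positivity)]; push_cast; rfl
  have hW0 : W 0 = H a + C * Real.log (1 + r) := by
    simp [W, L, hlr]
  have hW1 : W (2 * Real.pi) = H a + C * (2 * Real.pi * I + Real.log (1 + r)) := by
    simp only [W, L]
    push_cast
    rw [exp_neg, exp_two_pi_mul_I, inv_one, mul_one, mul_one, hlr]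
    ring
  rw [hrhs, intervalIntegral.integral_const_mul, hintW, hW0, hW1] at hparts
  rw [hlhs, hlog]
  have hpi : (Real.pi : ℂ) ≠ 0 := by exact_mod_cast Real.pi_ne_zero
  rw [eq_sub_iff_add_eq, one_div, eq_inv_mul_iff_mul_eq₀ (by simp [hpi])]
  refine mul_left_cancel₀ I_ne_zero (Eq.trans ?_ hparts.symm)
  push_cast
  ring_nf
end

section
/- Let f : ℝ → ℝ admit an entire complex extension with Taylor coefficients c_j = f^{(j)}(0)/j!, and let 0 < ω < a. Then the series Σ_{k=0}^{∞} (-ω)^k ⨍_0^a f(x)/x^{k+1} dx converges absolutely and ∫_0^a f(x)/(ω + x) dx = Σ_{k=0}^{∞} (-ω)^k ⨍_0^a f(x)/x^{k+1} dx − f(-ω) ln ω, where f(-ω) denotes the value of the entire extension at -ω. -/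
open Filter MeasureTheory Set

/-- Antiderivative of `x ^ j / x ^ (k + 1)` on the positive half-line; at `j = k` the first summand
vanishes by the convention for division by zero. -/
noncomputable def powDivPowPrimitive (j k : ℕ) (x : ℝ) : ℝ :=
  x ^ j / x ^ k / ((j : ℝ) - k) + if j = k then Real.log x else 0

theorem integral_pow_div_pow (j k : ℕ) {u a : ℝ} (hu : 0 < u) (hua : u ≤ a) :
    ∫ x in u..a, x ^ j * (x ^ (k + 1))⁻¹ =
      powDivPowPrimitive j k a - powDivPowPrimitive j k u := by
  have ha : 0 < a := hu.trans_le hua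
  have h0 : (0 : ℝ) ∉ uIcc u a := by
    rw [uIcc_of_le hua]
    exact fun h => absurd h.1 (not_le.mpr hu)
  have hcongr : ∫ x in u..a, x ^ j * (x ^ (k + 1))⁻¹ =
      ∫ x in u..a, x ^ ((j : ℤ) - k - 1) := by
    refine intervalIntegral.integral_congr fun x hx => ?_
    have hx0 : x ≠ 0 := fun h => h0 (h ▸ hx)
    rw [sub_sub, zpow_sub₀ hx0, div_eq_mul_inv]
    norm_cast
  rw [hcongr]
  unfold powDivPowPrimitive
  by_cases hjk : j = k
  · subst hjk
    have : ((j : ℤ) - j - 1) = -1 := by ring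
    simp only [this, zpow_neg_one]
    simp only [sub_self, div_zero, zero_add, if_true]
    rw [integral_inv_of_pos hu ha, Real.log_div ha.ne' hu.ne']
  · have hne : (j : ℤ) - k - 1 ≠ -1 := by omega
    rw [integral_zpow (Or.inr ⟨hne, h0⟩)]
    have hexp : (j : ℤ) - k - 1 + 1 = (j : ℤ) - k := by ring
    simp only [hexp, if_neg hjk, add_zero, zpow_sub₀ ha.ne', zpow_sub₀ hu.ne', zpow_natCast]
    push_cast
    ring

theorem hasSum_mul_integral_pow_mul {f g : ℝ → ℝ} {c : ℕ → ℝ}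
    (hf : ∀ x, HasSum (fun j => c j * x ^ j) (f x)) {u a : ℝ} (hu : 0 ≤ u) (hua : u ≤ a)
    (hg : ContinuousOn g (Icc u a)) :
    HasSum (fun j => c j * ∫ x in u..a, x ^ j * g x) (∫ x in u..a, f x * g x) := by
  obtain ⟨B, hB⟩ := isCompact_Icc.exists_bound_of_continuousOn hg
  have hs : Summable fun j => |c j * a ^ j| * B := (hf a).summable.abs.mul_right B
  simp_rw [← intervalIntegral.integral_const_mul]
  refine intervalIntegral.hasSum_integral_of_dominated_convergence
    (fun j _ => |c j * a ^ j| * B) (fun j => ?_) (fun j => ?_) ?_ ?_ ?_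
  · refine ContinuousOn.aestronglyMeasurable ?_ measurableSet_uIoc
    rw [uIoc_of_le hua]
    exact (continuousOn_const.mul ((continuous_pow j).continuousOn.mul
      (hg.mono Ioc_subset_Icc_self)))
  · refine ae_of_all _ fun x hx => ?_
    rw [uIoc_of_le hua] at hx
    have hx0 : 0 ≤ x := hu.trans hx.1.le
    rw [← mul_assoc, norm_mul, Real.norm_eq_abs, abs_mul, abs_mul, abs_of_nonneg (pow_nonneg hx0 j),
      abs_of_nonneg (pow_nonneg (hx0.trans hx.2) j)]
    gcongr
    · exact mul_nonneg (abs_nonneg _) (pow_nonneg (hx0.trans hx.2) j)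
    · exact hx.2
    · exact hB x (Ioc_subset_Icc_self hx)
  · exact ae_of_all _ fun _ _ => hs
  · exact intervalIntegrable_const
  · refine ae_of_all _ fun x _ => ?_
    simpa only [mul_assoc] using (hf x).mul_right (g x)

theorem abs_powDivPowPrimitive_le (j k : ℕ) {a : ℝ} (ha : 0 < a) :
    |powDivPowPrimitive j k a| ≤ a ^ j / a ^ k * (1 + |Real.log a|) := by
  unfold powDivPowPrimitive
  have hq : 0 < a ^ j / a ^ k := by positivity
  by_cases hjk : j = k
  · subst hjk
    simp [ha.ne']
  · rw [if_neg hjk, add_zero, abs_div, abs_of_pos hq]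
    have h1 : (1 : ℝ) ≤ |(j : ℝ) - k| := by
      have : (1 : ℤ) ≤ |(j : ℤ) - k| := Int.one_le_abs (by omega)
      exact_mod_cast this
    calc a ^ j / a ^ k / |(j : ℝ) - k| ≤ a ^ j / a ^ k := div_le_self hq.le h1
      _ ≤ _ := le_mul_of_one_le_right hq.le (by linarith [abs_nonneg (Real.log a)])

theorem tendsto_finitePart_of_hasSum {f : ℝ → ℝ} {c : ℕ → ℝ}
    (hf : ∀ x, HasSum (fun j => c j * x ^ j) (f x)) {a : ℝ} (ha : 0 < a) (k : ℕ) :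
    Tendsto
      (fun ε : ℝ =>
        (∫ x in ε..a, f x / x ^ (k + 1)) -
          ((∑ j ∈ Finset.range k, c j / (((k - j : ℕ) : ℝ) * ε ^ (k - j))) -
            c k * Real.log ε))
      (nhdsWithin 0 (Ioi 0)) (nhds (∑' j, c j * powDivPowPrimitive j k a)) := by
  have hsum : Summable fun j => |c j| * (a ^ j / a ^ k * (1 + |Real.log a|)) := by
    refine ((hf a).summable.abs.mul_right ((1 + |Real.log a|) / a ^ k)).congr fun j => ?_
    rw [abs_mul, abs_of_pos (pow_pos ha j)]
    ring
  have hc1 : Summable fun j => |c j| := by simpa using (hf 1).summable.abs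
  set r : ℕ → ℝ → ℝ := fun j ε => if k < j then ε ^ (j - k) / ((j : ℝ) - k) else 0 with hr
  have hev : ∀ᶠ ε : ℝ in nhdsWithin 0 (Ioi 0), 0 < ε ∧ ε < a ∧ ε < 1 := by
    filter_upwards [self_mem_nhdsWithin, nhdsWithin_le_nhds (Iio_mem_nhds ha),
      nhdsWithin_le_nhds (Iio_mem_nhds one_pos)] with ε h1 h2 h3
    exact ⟨h1, h2, h3⟩
  have hlim : Tendsto (fun ε => ∑' j, c j * (powDivPowPrimitive j k a - r j ε))
      (nhdsWithin 0 (Ioi 0)) (nhds (∑' j, c j * powDivPowPrimitive j k a)) := by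
    refine tendsto_tsum_of_dominated_convergence (hsum.add hc1) (fun j => ?_) ?_
    · have hrj : Tendsto (r j) (nhdsWithin 0 (Ioi 0)) (nhds 0) := by
        refine Tendsto.mono_left ?_ nhdsWithin_le_nhds
        by_cases hkj : k < j
        · have : Continuous fun ε : ℝ => ε ^ (j - k) / ((j : ℝ) - k) := by fun_prop
          have h := this.tendsto 0
          simp only [zero_pow (Nat.sub_ne_zero_of_lt hkj), zero_div] at h
          simpa only [hr, if_pos hkj] using h
        · simp only [hr, if_neg hkj]
          exact tendsto_const_nhds
      simpa using (tendsto_const_nhds.sub hrj).const_mul (c j)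
    · filter_upwards [hev] with ε ⟨h0, _, h1⟩ j
      have hrle : |r j ε| ≤ 1 := by
        by_cases hkj : k < j
        · have hd : (1 : ℝ) ≤ (j : ℝ) - k := by
            have : (k : ℝ) + 1 ≤ j := by exact_mod_cast hkj
            linarith
          simp only [hr, if_pos hkj]
          rw [abs_of_nonneg (by positivity), div_le_one (by positivity)]
          exact (pow_le_one₀ h0.le h1.le).trans hd
        · simp [hr, hkj]
      rw [Real.norm_eq_abs, abs_mul]
      calc |c j| * |powDivPowPrimitive j k a - r j ε|
          ≤ |c j| * (a ^ j / a ^ k * (1 + |Real.log a|) + 1) := by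
            gcongr
            exact (abs_sub _ _).trans (add_le_add (abs_powDivPowPrimitive_le j k ha) hrle)
        _ = _ := by ring
  refine hlim.congr' ?_
  filter_upwards [hev] with ε ⟨h0, hεa, _⟩
  have hint := hasSum_mul_integral_pow_mul hf (g := fun x => (x ^ (k + 1))⁻¹) h0.le hεa.le
    (ContinuousOn.inv₀ (by fun_prop) fun x hx => pow_ne_zero _ (h0.trans_le hx.1).ne')
  simp only [integral_pow_div_pow _ k h0 hεa.le] at hint
  have hsplit : ∀ j, c j * (powDivPowPrimitive j k a - r j ε) =
      c j * (powDivPowPrimitive j k a - powDivPowPrimitive j k ε) +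
        c j * (powDivPowPrimitive j k ε - r j ε) := fun j => by ring
  have hfin : HasSum (fun j => c j * (powDivPowPrimitive j k ε - r j ε))
      (∑ j ∈ Finset.range (k + 1), c j * (powDivPowPrimitive j k ε - r j ε)) := by
    refine hasSum_sum_of_ne_finset_zero fun j hj => ?_
    have hkj : k < j := by simpa [Nat.lt_succ_iff] using hj
    have : ε ^ j / ε ^ k = ε ^ (j - k) := by
      rw [pow_sub₀ _ h0.ne' hkj.le, div_eq_mul_inv]
    simp [powDivPowPrimitive, hr, hkj, hkj.ne', this]
  simp_rw [hsplit]
  rw [(hint.add hfin).tsum_eq, Finset.sum_range_succ]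
  have hlow : ∀ j ∈ Finset.range k, c j * (powDivPowPrimitive j k ε - r j ε) =
      -(c j / (((k - j : ℕ) : ℝ) * ε ^ (k - j))) := fun j hj => by
    have hjk : j < k := Finset.mem_range.mp hj
    have hd : (j : ℝ) - k = -((k - j : ℕ) : ℝ) := by
      rw [Nat.cast_sub hjk.le]; ring
    have hp : ε ^ k = ε ^ j * ε ^ (k - j) := by
      rw [← pow_add, Nat.add_sub_cancel' hjk.le]
    have hd0 : ((k - j : ℕ) : ℝ) ≠ 0 := by
      exact_mod_cast Nat.sub_ne_zero_of_lt hjk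
    simp only [powDivPowPrimitive, hr, if_neg hjk.ne, if_neg hjk.not_gt, hd, hp]
    field_simp
    ring
  rw [Finset.sum_congr rfl hlow]
  simp only [powDivPowPrimitive, hr, Finset.sum_neg_distrib, lt_irrefl, if_true, if_false, sub_self,
    div_eq_mul_inv]
  ring

theorem integral_pow_succ_div_add {ω a : ℝ} (hω : 0 < ω) (ha : 0 ≤ a) (j : ℕ) :
    ∫ x in (0 : ℝ)..a, x ^ (j + 1) * (ω + x)⁻¹ =
      a ^ (j + 1) / (j + 1) - ω * ∫ x in (0 : ℝ)..a, x ^ j * (ω + x)⁻¹ := by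
  have hne : ∀ x ∈ uIcc 0 a, ω + x ≠ 0 := fun x hx => by
    rw [uIcc_of_le ha] at hx
    linarith [hx.1]
  have hi : IntervalIntegrable (fun x : ℝ => x ^ j * (ω + x)⁻¹) volume 0 a :=
    ContinuousOn.intervalIntegrable
      ((continuous_pow j).continuousOn.mul (ContinuousOn.inv₀ (by fun_prop) hne))
  have hpow : ∫ x in (0 : ℝ)..a, x ^ j = a ^ (j + 1) / (j + 1) := by
    rw [integral_pow]; simp
  rw [← hpow, ← intervalIntegral.integral_const_mul, ← intervalIntegral.integral_sub
    (intervalIntegral.intervalIntegrable_pow j) (hi.const_mul ω)]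
  refine intervalIntegral.integral_congr fun x hx => ?_
  have := hne x hx
  field_simp
  ring

theorem hasSum_neg_pow_mul_powDivPowPrimitive {ω a : ℝ} (hω : 0 < ω) (ha : ω < a) (j : ℕ) :
    HasSum (fun k => (-ω) ^ k * powDivPowPrimitive j k a)
      ((∫ x in (0 : ℝ)..a, x ^ j * (ω + x)⁻¹) + (-ω) ^ j * Real.log ω) := by
  have ha0 : 0 < a := hω.trans ha
  induction j with
  | zero =>
    have hint : ∫ x in (0 : ℝ)..a, x ^ 0 * (ω + x)⁻¹ = Real.log (ω + a) - Real.log ω := by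
      simp only [pow_zero, one_mul]
      rw [intervalIntegral.integral_comp_add_left (fun x => x⁻¹) ω, add_zero,
        integral_inv_of_pos hω (by positivity), Real.log_div (by positivity) hω.ne']
    have hlog : Real.log (1 - -(ω / a)) = Real.log (ω + a) - Real.log a := by
      rw [← Real.log_div (by positivity) ha0.ne']
      congr 1
      field_simp
      ring
    have hq : |-(ω / a)| < 1 := by
      rw [abs_neg, abs_of_pos (by positivity), div_lt_one ha0]
      exact ha
    rw [hint, ← hasSum_nat_add_iff' 1]
    have h := (Real.hasSum_pow_div_log_of_abs_lt_one hq).neg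
    rw [hlog] at h
    convert h using 1
    · ext k
      have hk : (k : ℝ) + 1 ≠ 0 := by positivity
      simp only [powDivPowPrimitive, Nat.cast_zero, Nat.cast_add, Nat.cast_one, 
        if_neg (Nat.succ_ne_zero k).symm, neg_div' a ω, div_pow]
      field_simp
      ring
    · simp [powDivPowPrimitive]
  | succ j ih =>
    have hstep : ∀ k, (-ω) ^ (k + 1) * powDivPowPrimitive (j + 1) (k + 1) a =
        -ω * ((-ω) ^ k * powDivPowPrimitive j k a) := fun k => by
      simp only [powDivPowPrimitive, Nat.cast_add, Nat.cast_one, add_left_inj,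
        add_sub_add_right_eq_sub, pow_succ, mul_div_mul_right _ _ ha0.ne']
      ring
    have hfirst : ∑ k ∈ Finset.range 1, (-ω) ^ k * powDivPowPrimitive (j + 1) k a =
        a ^ (j + 1) / (j + 1) := by
      simp [powDivPowPrimitive]
    rw [← hasSum_nat_add_iff' 1, integral_pow_succ_div_add hω ha0.le, hfirst, funext hstep]
    have h := ih.mul_left (-ω)
    rwa [show ∀ I : ℝ, -ω * (I + (-ω) ^ j * Real.log ω) =
      a ^ (j + 1) / (j + 1) - ω * I + (-ω) ^ (j + 1) * Real.log ω - a ^ (j + 1) / (j + 1) from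
        fun I => by ring] at h

theorem hasSum_of_entire_extension {f : ℝ → ℝ} {F : ℂ → ℂ} {c : ℕ → ℝ}
    (hF : Differentiable ℂ F) (hFf : ∀ x : ℝ, F x = f x)
    (hc : ∀ j, (c j : ℂ) = iteratedDeriv j F 0 / (Nat.factorial j)) (x : ℝ) :
    HasSum (fun j => c j * x ^ j) (f x) := by
  have h := Complex.hasSum_taylorSeries_of_entire hF 0 (x : ℂ)
  rw [hFf] at h
  have hterm : ∀ j, ((c j * x ^ j : ℝ) : ℂ) =
      (j.factorial : ℂ)⁻¹ • ((x : ℂ) - 0) ^ j • iteratedDeriv j F 0 := fun j => by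
    push_cast
    rw [hc]
    simp only [sub_zero, smul_eq_mul]
    ring
  rw [← funext hterm] at h
  exact Complex.hasSum_ofReal.mp h

/-- Finite-part integration of the incomplete Stieltjes transform of order 1:
`∫_0^a f(x)/(ω+x) dx = Σ_{k=0}^∞ (-ω)^k ⨍_0^a f(x)/x^{k+1} dx − f(-ω) ln ω`,
the series converging absolutely. -/
theorem stmt_9 (f : ℝ → ℝ) (F : ℂ → ℂ) (c : ℕ → ℝ)
    (hF : Differentiable ℂ F) (hFf : ∀ x : ℝ, F x = f x)
    (hc : ∀ j, (c j : ℂ) = iteratedDeriv j F 0 / (Nat.factorial j))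
    (ω a : ℝ) (hω : 0 < ω) (ha : ω < a) :
    ∃ fp : ℕ → ℝ,
      (∀ k : ℕ,
        Tendsto
          (fun ε : ℝ =>
            (∫ x in ε..a, f x / x ^ (k + 1)) -
              ((∑ j ∈ Finset.range k,
                  c j / (((k - j : ℕ) : ℝ) * ε ^ (k - j))) -
                c k * Real.log ε))
          (nhdsWithin 0 (Set.Ioi 0)) (nhds (fp k))) ∧
      Summable (fun k : ℕ => |(-ω) ^ k * fp k|) ∧
      (∫ x in (0 : ℝ)..a, f x / (ω + x)) =
        (∑' k : ℕ, (-ω) ^ k * fp k) - f (-ω) * Real.log ω := by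
  have ha0 : 0 < a := hω.trans ha
  have hf := hasSum_of_entire_extension hF hFf hc
  set t : ℕ × ℕ → ℝ := fun p => (-ω) ^ p.1 * (c p.2 * powDivPowPrimitive p.2 p.1 a) with ht
  have hbound : Summable fun p : ℕ × ℕ =>
      (ω / a) ^ p.1 * (|c p.2 * a ^ p.2| * (1 + |Real.log a|)) :=
    (summable_geometric_of_lt_one (by positivity) ((div_lt_one ha0).mpr ha)).mul_of_nonneg
      ((hf a).summable.abs.mul_right _) (fun _ => by positivity) (fun _ => by positivity)
  have hts : Summable fun p => ‖t p‖ := by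
    refine Summable.of_nonneg_of_le (fun _ => norm_nonneg _) (fun p => ?_) hbound
    simp only [ht, Real.norm_eq_abs, abs_mul, abs_pow, abs_neg, abs_of_pos hω, abs_of_pos ha0]
    calc ω ^ p.1 * (|c p.2| * |powDivPowPrimitive p.2 p.1 a|)
        ≤ ω ^ p.1 * (|c p.2| * (a ^ p.2 / a ^ p.1 * (1 + |Real.log a|))) := by
          gcongr
          exact abs_powDivPowPrimitive_le _ _ ha0
      _ = _ := by rw [div_pow]; ring
  have hrow : ∀ k, (-ω) ^ k * ∑' j, c j * powDivPowPrimitive j k a = ∑' j, t (k, j) :=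
    fun k => tsum_mul_left.symm
  refine ⟨fun k => ∑' j, c j * powDivPowPrimitive j k a,
    tendsto_finitePart_of_hasSum hf ha0, ?_, ?_⟩
  · simp only [hrow]
    refine Summable.of_nonneg_of_le (fun _ => abs_nonneg _) (fun k => ?_) hts.prod
    exact norm_tsum_le_tsum_norm (hts.prod_factor k)
  · have hcol : ∀ j, ∑' k, t (k, j) =
        c j * (∫ x in (0 : ℝ)..a, x ^ j * (ω + x)⁻¹) + c j * (-ω) ^ j * Real.log ω := fun j => by
      have h := (hasSum_neg_pow_mul_powDivPowPrimitive hω ha j).mul_left (c j)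
      rw [mul_add, ← mul_assoc (c j) ((-ω) ^ j)] at h
      rw [← h.tsum_eq]
      exact tsum_congr fun k => mul_left_comm _ _ _
    have hint := hasSum_mul_integral_pow_mul hf (g := fun x => (ω + x)⁻¹) le_rfl ha0.le
      (ContinuousOn.inv₀ (by fun_prop) fun x hx => (add_pos_of_pos_of_nonneg hω hx.1).ne')
    simp only [hrow]
    have hswap : ∑' k, ∑' j, t (k, j) = ∑' j, ∑' k, t (k, j) :=
      (Summable.tsum_comm (f := fun k j => t (k, j)) hts.of_norm).symm
    rw [hswap, tsum_congr hcol,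
      (hint.add ((hf (-ω)).mul_right (Real.log ω))).tsum_eq]
    simp only [div_eq_mul_inv, add_sub_cancel_right]
end

section
/- Let f : ℝ → ℝ admit an entire complex extension F with Taylor coefficients c_j = f^{(j)}(0)/j!, let n ≥ 1 be an integer, 0 < ν < 1 and 0 < ω < a. Then ∫_0^a x^{-ν} f(x)/(ω + x)^n dx = Σ_{k=0}^{∞} binom(-n, k) ω^k ⨍_0^a f(x)/x^{n+k+ν} dx + (π/(sin(πν) ω^ν)) Σ_{k=0}^{n-1} F^{(n-1-k)}(-ω) (ν)_k/(k! (n-1-k)! ω^k), where (ν)_k = ν(ν+1)⋯(ν+k-1) is the Pochhammer symbol ((ν)_0 = 1) and the infinite series converges. -/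
open Filter MeasureTheory Set

theorem integral_Ioo_rpow_mul_one_sub_rpow {u v : ℝ} (hu : 0 < u) (hv : 0 < v) :
    ∫ t in Ioo (0 : ℝ) 1, t ^ (u - 1) * (1 - t) ^ (v - 1) =
      Real.Gamma u * Real.Gamma v / Real.Gamma (u + v) := by
  have h := Complex.betaIntegral_eq_Gamma_mul_div (u : ℂ) (v : ℂ) (by simpa) (by simpa)
  rw [Complex.betaIntegral, intervalIntegral.integral_of_le zero_le_one,
    integral_Ioc_eq_integral_Ioo, ← Complex.ofReal_add, Complex.Gamma_ofReal, Complex.Gamma_ofReal,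
    Complex.Gamma_ofReal] at h
  apply Complex.ofReal_injective
  rw [← integral_complex_ofReal]
  push_cast
  rw [← h]
  refine setIntegral_congr_fun measurableSet_Ioo fun t ht => ?_
  have h1 : (0 : ℝ) ≤ 1 - t := by linarith [ht.2]
  rw [Complex.ofReal_cpow ht.1.le, Complex.ofReal_cpow h1]
  push_cast
  rfl

theorem image_div_add_Ioi {ω : ℝ} (hω : 0 < ω) :
    (fun x : ℝ => x / (ω + x)) '' Ioi 0 = Ioo 0 1 := by
  ext t
  constructor
  · rintro ⟨x, hx, rfl⟩
    have hx : 0 < x := hx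
    exact ⟨by positivity, by rw [div_lt_one (by positivity)]; linarith⟩
  · rintro ⟨h0, h1⟩
    have : 0 < 1 - t := by linarith
    refine ⟨ω * t / (1 - t), mem_Ioi.2 (by positivity), ?_⟩
    dsimp only
    field_simp
    ring

theorem Gamma_add_natCast_eq_prod {ν : ℝ} (hν : 0 < ν) (n : ℕ) :
    Real.Gamma (ν + n) = (∏ i ∈ Finset.range n, (ν + (i : ℝ))) * Real.Gamma ν := by
  induction n with
  | zero => simp
  | succ n ih =>
    rw [Finset.prod_range_succ, Nat.cast_succ, ← add_assoc, Real.Gamma_add_one (by positivity), ih]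
    ring

theorem integral_Ioi_rpow_neg_div_add_pow {ν ω : ℝ} (hν0 : 0 < ν) (hν1 : ν < 1) (hω : 0 < ω)
    (n : ℕ) :
    ∫ x in Ioi (0 : ℝ), x ^ (-ν) / (ω + x) ^ (n + 1) =
      Real.pi / (Real.sin (Real.pi * ν) * ω ^ ν) *
        ((∏ i ∈ Finset.range n, (ν + (i : ℝ))) / (n.factorial * ω ^ n)) := by
  have hbeta := integral_Ioo_rpow_mul_one_sub_rpow (u := 1 - ν) (v := ν + n) (by linarith)
    (by positivity)
  have hinj : InjOn (fun x : ℝ => x / (ω + x)) (Ioi 0) := by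
    intro x hx y hy hxy
    have hx : 0 < x := hx
    have hy : 0 < y := hy
    dsimp only at hxy
    field_simp at hxy
    nlinarith
  have hder : ∀ x ∈ Ioi (0 : ℝ),
      HasDerivWithinAt (fun x : ℝ => x / (ω + x)) (ω / (ω + x) ^ 2) (Ioi 0) x := by
    intro x hx
    have hx : 0 < x := hx
    have h := (hasDerivAt_id x).div ((hasDerivAt_id x).const_add ω) (by simp; positivity)
    convert! h.hasDerivWithinAt using 1
    simp
  rw [← image_div_add_Ioi hω,
    integral_image_eq_integral_abs_deriv_smul measurableSet_Ioi hder hinj] at hbeta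
  have hcongr : ∀ x ∈ Ioi (0 : ℝ), |ω / (ω + x) ^ 2| • ((x / (ω + x)) ^ (1 - ν - 1) *
      (1 - x / (ω + x)) ^ (ν + n - 1)) = (ω ^ ν * ω ^ n) * (x ^ (-ν) / (ω + x) ^ (n + 1)) := by
    intro x hx
    have hx : 0 < x := hx
    have hy : 0 < ω + x := by positivity
    have h1 : 1 - x / (ω + x) = ω / (ω + x) := by field_simp; ring
    rw [abs_of_pos (by positivity), h1, Real.div_rpow hx.le hy.le, Real.div_rpow hω.le hy.le,
      smul_eq_mul, show (1 - ν - 1) = -ν by ring, Real.rpow_sub hω, Real.rpow_sub hy,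
      Real.rpow_add hω, Real.rpow_add hy, Real.rpow_neg hy.le, Real.rpow_natCast, Real.rpow_natCast,
      Real.rpow_one, Real.rpow_one]
    have := (Real.rpow_pos_of_pos hy ν).ne'
    field_simp
    ring
  rw [setIntegral_congr_fun measurableSet_Ioi hcongr, integral_const_mul,
    Gamma_add_natCast_eq_prod hν0, show 1 - ν + (ν + n) = n + 1 by ring,
    Real.Gamma_nat_eq_factorial] at hbeta
  have hrefl := Real.Gamma_mul_Gamma_one_sub ν
  have hω' := (Real.rpow_pos_of_pos hω ν).ne'
  rw [← mul_right_inj' (mul_ne_zero hω' (pow_ne_zero n hω.ne')), hbeta, ← div_div, ← hrefl]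
  field_simp

theorem summable_choose_mul_pow (n : ℕ) {r : ℝ} (hr0 : 0 ≤ r) (hr1 : r < 1) :
    Summable fun k : ℕ => (Nat.choose (n + k - 1) k : ℝ) * r ^ k := by
  cases n with
  | zero =>
    refine summable_of_ne_finset_zero (s := {0}) fun k hk => ?_
    have : 0 < k := Nat.pos_of_ne_zero (by simpa using hk)
    rw [Nat.choose_eq_zero_of_lt (by omega)]
    simp
  | succ n =>
    refine (summable_choose_mul_geometric_of_norm_lt_one n
      (r := r) (by rwa [Real.norm_of_nonneg hr0])).congr fun k => ?_
    rw [show n + 1 + k - 1 = k + n by omega, Nat.choose_symm_add]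

theorem hasSum_neg_one_pow_choose (n : ℕ) {r : ℝ} (hr0 : 0 ≤ r) (hr1 : r < 1) :
    HasSum (fun k : ℕ => (-1 : ℝ) ^ k * (Nat.choose (n + k) k : ℝ) * r ^ k)
      (1 / (1 + r) ^ (n + 1)) := by
  have h := hasSum_choose_mul_geometric_of_norm_lt_one n
    (r := -r) (by rwa [norm_neg, Real.norm_of_nonneg hr0])
  rw [sub_neg_eq_add] at h
  refine h.congr_fun fun k => ?_
  rw [Nat.add_comm k n, Nat.choose_symm_add, neg_pow]
  ring

theorem hasSum_integral_Ioi_rpow_neg_div_add_pow {ν ω a : ℝ} (hν0 : 0 < ν)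
    (hω : 0 < ω) (ha : ω < a) (n : ℕ) :
    HasSum (fun k : ℕ => (-1 : ℝ) ^ k * (Nat.choose (n + k) k : ℝ) * ω ^ k *
        (a ^ (-(n : ℝ) - k - ν) / (n + k + ν)))
      (∫ x in Ioi a, x ^ (-ν) / (ω + x) ^ (n + 1)) := by
  have ha0 : 0 < a := hω.trans ha
  have hint : ∀ k : ℕ, ∫ x in Ioi a, x ^ (-(n : ℝ) - 1 - k - ν) =
      a ^ (-(n : ℝ) - k - ν) / (n + k + ν) := by
    intro k
    have hk : 0 < (n : ℝ) + k + ν := by positivity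
    rw [integral_Ioi_rpow_of_lt (by linarith) ha0,
      show -(n : ℝ) - 1 - k - ν + 1 = -(n + k + ν) by ring, neg_div_neg_eq]
    congr 2
    ring
  have hab : ω / a < 1 := by rwa [div_lt_one ha0]
  have h := hasSum_integral_of_summable_integral_norm (μ := volume.restrict (Ioi a))
    (F := fun (k : ℕ) (x : ℝ) => (-1 : ℝ) ^ k * (Nat.choose (n + k) k : ℝ) * ω ^ k *
      x ^ (-(n : ℝ) - 1 - k - ν)) ?_ ?_
  · simp only [integral_const_mul, hint] at h
    rw [setIntegral_congr_fun (g := fun x => ∑' k : ℕ, (-1 : ℝ) ^ k *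
      (Nat.choose (n + k) k : ℝ) * ω ^ k * x ^ (-(n : ℝ) - 1 - k - ν)) measurableSet_Ioi]
    · exact h
    intro x hx
    have hx : a < x := hx
    have hx0 : 0 < x := ha0.trans hx
    have hs := (hasSum_neg_one_pow_choose n (r := ω / x) (by positivity)
      (by rw [div_lt_one hx0]; linarith)).mul_left (x ^ (-(n : ℝ) - 1 - ν))
    refine Eq.trans ?_ (Eq.trans hs.tsum_eq.symm ?_)
    · rw [show -(n : ℝ) - 1 - ν = -ν - ((n + 1 : ℕ) : ℝ) by push_cast; ring,
        Real.rpow_sub_natCast hx0.ne', show 1 + ω / x = (ω + x) / x by field_simp; ring, div_pow]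
      field_simp
    · refine tsum_congr fun k => ?_
      rw [show -(n : ℝ) - 1 - k - ν = -(n : ℝ) - 1 - ν - k by ring, Real.rpow_sub_natCast hx0.ne',
        div_pow]
      field_simp
  · intro k
    have hk : 0 < (n : ℝ) + k + ν := by positivity
    exact (integrableOn_Ioi_rpow_of_lt (by linarith) ha0).const_mul _
  · have hs : Summable fun k : ℕ => (Nat.choose (n + 1 + k - 1) k : ℝ) * (ω / a) ^ k *
        (a ^ (-(n : ℝ) - ν) / ν) := (summable_choose_mul_pow (n + 1) (by positivity) hab).mul_right _
    refine Summable.of_nonneg_of_le (fun k => integral_nonneg fun x => norm_nonneg _)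
      (fun k => ?_) hs
    have hcongr : ∀ x ∈ Ioi a, ‖(-1 : ℝ) ^ k * (Nat.choose (n + k) k : ℝ) * ω ^ k *
        x ^ (-(n : ℝ) - 1 - k - ν)‖ = (Nat.choose (n + k) k : ℝ) * ω ^ k *
        x ^ (-(n : ℝ) - 1 - k - ν) := by
      intro x hx
      have hx0 : 0 < x := ha0.trans hx
      rw [norm_mul, norm_mul, norm_mul, norm_pow, norm_neg, norm_one, one_pow, one_mul,
        Real.norm_of_nonneg (by positivity), Real.norm_of_nonneg (by positivity),
        Real.norm_of_nonneg (by positivity)]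
    rw [setIntegral_congr_fun measurableSet_Ioi hcongr, integral_const_mul, hint,
      show n + 1 + k - 1 = n + k by omega, show -(n : ℝ) - k - ν = -(n : ℝ) - ν - k by ring,
      Real.rpow_sub_natCast ha0.ne']
    calc _ = (Nat.choose (n + k) k : ℝ) * (ω / a) ^ k * (a ^ (-(n : ℝ) - ν) / (n + k + ν)) := by
          rw [div_pow]; ring
      _ ≤ _ := by
          gcongr
          linarith [Nat.cast_nonneg (α := ℝ) n, Nat.cast_nonneg (α := ℝ) k]

theorem intervalIntegrable_rpow_neg_mul {ν a : ℝ} (hν1 : ν < 1) {g : ℝ → ℝ}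
    (hg : ContinuousOn g (uIcc 0 a)) :
    IntervalIntegrable (fun x : ℝ => x ^ (-ν) * g x) volume 0 a :=
  (intervalIntegral.intervalIntegrable_rpow' (by linarith)).mul_continuousOn hg

theorem continuousOn_pow_div_add_pow {ω a : ℝ} (hω : 0 < ω) (ha : 0 ≤ a) (j n : ℕ) :
    ContinuousOn (fun x : ℝ => x ^ j / (ω + x) ^ n) (uIcc 0 a) := by
  refine ContinuousOn.div (by fun_prop) (by fun_prop) fun x hx => ?_
  rw [uIcc_of_le ha] at hx
  have : 0 < ω + x := by linarith [hx.1]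
  positivity

/-- The contribution of the branch point to the `j`-th moment of `x ^ (-ν) / (ω + x) ^ n`. -/
noncomputable def branchTerm (ν ω : ℝ) (j n : ℕ) : ℝ :=
  Real.pi / (Real.sin (Real.pi * ν) * ω ^ ν) *
    ∑ k ∈ Finset.range n, (Nat.choose j (n - 1 - k) : ℝ) * (-ω) ^ (j - (n - 1 - k)) *
      ((∏ i ∈ Finset.range k, (ν + (i : ℝ))) / (k.factorial * ω ^ k))

theorem choose_mul_pow_succ (x : ℝ) (j m : ℕ) :
    (Nat.choose (j + 1) (m + 1) : ℝ) * x ^ (j + 1 - (m + 1)) =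
      (Nat.choose j m : ℝ) * x ^ (j - m) +
        x * ((Nat.choose j (m + 1) : ℝ) * x ^ (j - (m + 1))) := by
  rw [Nat.choose_succ_succ, Nat.add_sub_add_right]
  rcases lt_or_ge m j with h | h
  · obtain ⟨d, rfl⟩ := Nat.exists_eq_add_of_lt h
    rw [show m + d + 1 - m = d + 1 by omega, show m + d + 1 - (m + 1) = d by omega]
    push_cast
    ring
  · rw [Nat.choose_eq_zero_of_lt (by omega : j < m + 1)]
    simp

theorem branchTerm_succ_succ (ν ω : ℝ) (j n : ℕ) :
    branchTerm ν ω (j + 1) (n + 1) = branchTerm ν ω j n - ω * branchTerm ν ω j (n + 1) := by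
  unfold branchTerm
  rw [mul_left_comm, ← mul_sub]
  congr 1
  rw [Finset.sum_range_succ, Finset.sum_range_succ, mul_add, Finset.mul_sum, ← sub_sub,
    ← Finset.sum_sub_distrib]
  have h : ∀ k ∈ Finset.range n,
      (Nat.choose (j + 1) (n + 1 - 1 - k) : ℝ) * (-ω) ^ (j + 1 - (n + 1 - 1 - k)) *
        ((∏ i ∈ Finset.range k, (ν + (i : ℝ))) / (k.factorial * ω ^ k)) =
      (Nat.choose j (n - 1 - k) : ℝ) * (-ω) ^ (j - (n - 1 - k)) *
        ((∏ i ∈ Finset.range k, (ν + (i : ℝ))) / (k.factorial * ω ^ k)) -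
      ω * ((Nat.choose j (n + 1 - 1 - k) : ℝ) * (-ω) ^ (j - (n + 1 - 1 - k)) *
        ((∏ i ∈ Finset.range k, (ν + (i : ℝ))) / (k.factorial * ω ^ k))) := by
    intro k hk
    have hk : k < n := Finset.mem_range.1 hk
    rw [show n + 1 - 1 - k = n - 1 - k + 1 by omega, choose_mul_pow_succ]
    ring
  rw [Finset.sum_congr rfl h, sub_eq_add_neg (Finset.sum _ _)]
  congr 1
  simp only [add_tsub_cancel_right, tsub_self, Nat.choose_zero_right, tsub_zero]
  ring

theorem branchTerm_zero_succ (ν ω : ℝ) (n : ℕ) :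
    branchTerm ν ω 0 (n + 1) = Real.pi / (Real.sin (Real.pi * ν) * ω ^ ν) *
        ((∏ i ∈ Finset.range n, (ν + (i : ℝ))) / (n.factorial * ω ^ n)) := by
  unfold branchTerm
  rw [Finset.sum_range_succ, Finset.sum_eq_zero]
  · simp
  · intro k hk
    have hk : k < n := Finset.mem_range.1 hk
    rw [Nat.choose_eq_zero_of_lt (by omega)]
    simp

theorem integral_rpow_neg_mul_pow_div_succ {ν ω a : ℝ} (hν1 : ν < 1) (hω : 0 < ω) (ha : 0 ≤ a)
    (j n : ℕ) :
    ∫ x in (0 : ℝ)..a, x ^ (-ν) * (x ^ (j + 1) / (ω + x) ^ (n + 1)) =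
      (∫ x in (0 : ℝ)..a, x ^ (-ν) * (x ^ j / (ω + x) ^ n)) -
        ω * ∫ x in (0 : ℝ)..a, x ^ (-ν) * (x ^ j / (ω + x) ^ (n + 1)) := by
  have h1 := intervalIntegrable_rpow_neg_mul hν1 (continuousOn_pow_div_add_pow hω ha j n)
  have h2 := intervalIntegrable_rpow_neg_mul hν1 (continuousOn_pow_div_add_pow hω ha j (n + 1))
  rw [← intervalIntegral.integral_const_mul, ← intervalIntegral.integral_sub h1 (h2.const_mul ω)]
  refine intervalIntegral.integral_congr fun x hx => ?_
  rw [uIcc_of_le ha] at hx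
  have : 0 < ω + x := by linarith [hx.1]
  field_simp
  ring

theorem hasSum_moment_zero {ν a : ℝ} (hν1 : ν < 1) (ω : ℝ) (ha : 0 < a) (j : ℕ) :
    HasSum (fun k : ℕ => (-1 : ℝ) ^ k * (Nat.choose (0 + k - 1) k : ℝ) * ω ^ k *
        (a ^ ((j : ℝ) + 1 - (0 + k : ℕ) - ν) / ((j : ℝ) + 1 - (0 + k : ℕ) - ν)))
      ((∫ x in (0 : ℝ)..a, x ^ (-ν) * (x ^ j / (ω + x) ^ 0)) - branchTerm ν ω j 0) := by
  have hj : 0 < (j : ℝ) + 1 - ν := by linarith [Nat.cast_nonneg (α := ℝ) j]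
  have hint : ∫ x in (0 : ℝ)..a, x ^ (-ν) * (x ^ j / (ω + x) ^ 0) =
      a ^ ((j : ℝ) + 1 - ν) / ((j : ℝ) + 1 - ν) := by
    rw [intervalIntegral.integral_of_le ha.le, setIntegral_congr_fun
      (g := fun x => x ^ ((j : ℝ) - ν)) measurableSet_Ioc, ← intervalIntegral.integral_of_le ha.le,
      integral_rpow (Or.inl (by linarith)), show (j : ℝ) - ν + 1 = j + 1 - ν by ring,
      Real.zero_rpow hj.ne', sub_zero]
    intro x hx
    simp only [pow_zero, div_one]
    rw [sub_eq_neg_add, Real.rpow_add hx.1, Real.rpow_natCast]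
  convert! hasSum_single (f := fun k : ℕ => (-1 : ℝ) ^ k * (Nat.choose (0 + k - 1) k : ℝ) * ω ^ k *
    (a ^ ((j : ℝ) + 1 - (0 + k : ℕ) - ν) / ((j : ℝ) + 1 - (0 + k : ℕ) - ν))) 0 ?_ using 1
  · rw [hint]
    simp [branchTerm]
  · intro k hk
    rw [Nat.choose_eq_zero_of_lt (by omega)]
    simp

theorem hasSum_moment {ν ω a : ℝ} (hν0 : 0 < ν) (hν1 : ν < 1) (hω : 0 < ω) (ha : ω < a)
    (j n : ℕ) :
    HasSum (fun k : ℕ => (-1 : ℝ) ^ k * (Nat.choose (n + k - 1) k : ℝ) * ω ^ k *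
        (a ^ ((j : ℝ) + 1 - (n + k : ℕ) - ν) / ((j : ℝ) + 1 - (n + k : ℕ) - ν)))
      ((∫ x in (0 : ℝ)..a, x ^ (-ν) * (x ^ j / (ω + x) ^ n)) - branchTerm ν ω j n) := by
  have ha0 : 0 < a := hω.trans ha
  induction j generalizing n with
  | zero =>
    cases n with
    | zero => exact hasSum_moment_zero hν1 ω ha0 _
    | succ n =>
      have hfull := integral_Ioi_rpow_neg_div_add_pow hν0 hν1 hω n
      have hs : 0 < Real.sin (Real.pi * ν) := Real.sin_pos_of_pos_of_lt_pi
        (mul_pos Real.pi_pos hν0) (by nlinarith [Real.pi_pos])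
      have hint : IntegrableOn (fun x : ℝ => x ^ (-ν) / (ω + x) ^ (n + 1)) (Ioi 0) := by
        refine not_imp_comm.1 integral_undef ?_
        rw [hfull]
        have : 0 < ∏ i ∈ Finset.range n, (ν + (i : ℝ)) := Finset.prod_pos fun i _ => by positivity
        positivity
      rw [← Ioc_union_Ioi_eq_Ioi ha0.le, setIntegral_union (Ioc_disjoint_Ioi le_rfl)
        measurableSet_Ioi (hint.mono_set Ioc_subset_Ioi_self)
        (hint.mono_set (Ioi_subset_Ioi ha0.le)), ← intervalIntegral.integral_of_le ha0.le,
        ← branchTerm_zero_succ] at hfull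
      convert! (hasSum_integral_Ioi_rpow_neg_div_add_pow hν0 hω ha n).neg using 1
      · funext k
        rw [show n + 1 + k - 1 = n + k by omega, ← mul_neg, ← div_neg]
        push_cast
        congr 3 <;> ring
      · rw [← hfull]
        simp only [pow_zero, mul_one_div]
        ring
  | succ j ih =>
    cases n with
    | zero => exact hasSum_moment_zero hν1 ω ha0 _
    | succ n =>
      have hshift : HasSum (fun k : ℕ => if k = 0 then 0 else
          ω * ((-1 : ℝ) ^ (k - 1) * (Nat.choose (n + 1 + (k - 1) - 1) (k - 1) : ℝ) * ω ^ (k - 1) *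
        (a ^ ((j : ℝ) + 1 - (n + 1 + (k - 1) : ℕ) - ν) /
          ((j : ℝ) + 1 - (n + 1 + (k - 1) : ℕ) - ν))))
        (ω * ((∫ x in (0 : ℝ)..a, x ^ (-ν) * (x ^ j / (ω + x) ^ (n + 1))) -
          branchTerm ν ω j (n + 1))) := by
        rw [← hasSum_nat_add_iff' 1]
        simpa using (ih (n + 1)).mul_left ω
      convert! (ih n).sub hshift using 1
      · funext k
        cases k with
        | zero =>
          simp
        | succ k =>
          rw [if_neg (Nat.succ_ne_zero k), show n + 1 + (k + 1) - 1 = n + k + 1 by omega,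
            show n + (k + 1) - 1 = n + k by omega, show k + 1 - 1 = k by omega,
            show n + 1 + k - 1 = n + k by omega, Nat.choose_succ_succ]
          push_cast
          rw [show (j : ℝ) + 1 + 1 - (n + 1 + (k + 1)) - ν = j + 1 - (n + (k + 1)) - ν by ring,
           show (j : ℝ) + 1 - (n + 1 + k) - ν = j + 1 - (n + (k + 1)) - ν by ring]
          ring
      · rw [integral_rpow_neg_mul_pow_div_succ hν1 hω ha0.le, branchTerm_succ_succ]
        ring

theorem min_le_abs_intCast_sub (ν : ℝ) (i : ℤ) : min ν (1 - ν) ≤ |(i : ℝ) - ν| := by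
  rcases le_or_gt i 0 with h | h
  · have h' : (i : ℝ) ≤ 0 := by exact_mod_cast h
    exact (min_le_left _ _).trans (by rw [abs_sub_comm]; exact le_trans (by linarith) (le_abs_self _))
  · have h' : (1 : ℝ) ≤ i := by exact_mod_cast h
    exact (min_le_right _ _).trans (le_trans (by linarith) (le_abs_self _))

theorem min_le_abs_exponent (ν : ℝ) (j p : ℕ) :
    min ν (1 - ν) ≤ |(j : ℝ) + 1 - p - ν| := by
  have := min_le_abs_intCast_sub ν ((j : ℤ) + 1 - p)
  push_cast at this
  exact this

theorem exponent_ne_zero {ν : ℝ} (hν0 : 0 < ν) (hν1 : ν < 1) (j p : ℕ) :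
    (j : ℝ) + 1 - p - ν ≠ 0 :=
  abs_pos.1 ((lt_min hν0 (by linarith)).trans_le (min_le_abs_exponent ν j p))

theorem rpow_exponent_eq {a : ℝ} (ha : 0 < a) (ν : ℝ) (j p : ℕ) :
    a ^ ((j : ℝ) + 1 - p - ν) = a ^ j * a ^ (1 - (p : ℝ) - ν) := by
  rw [show (j : ℝ) + 1 - p - ν = 1 - (p : ℝ) - ν + j by ring, Real.rpow_add_natCast ha.ne', mul_comm]

theorem abs_finitePart_term_le {ν a : ℝ} (hν0 : 0 < ν) (hν1 : ν < 1) (ha : 0 < a) (b : ℝ)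
    (j p : ℕ) {t : ℝ} (ht : |t| ≤ a ^ ((j : ℝ) + 1 - p - ν)) :
    |b * (t / ((j : ℝ) + 1 - p - ν))| ≤
      |b| * a ^ j * (a ^ (1 - (p : ℝ) - ν) / min ν (1 - ν)) := by
  have hδ : 0 < min ν (1 - ν) := lt_min hν0 (by linarith)
  rw [rpow_exponent_eq ha] at ht
  rw [abs_mul, abs_div, mul_assoc, ← mul_div_assoc (a ^ j)]
  have := min_le_abs_exponent ν j p
  gcongr

theorem hasSum_integral_div_rpow {f : ℝ → ℝ} {c : ℕ → ℝ} {ν a ε : ℝ}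
    (hf : ∀ x, HasSum (fun j => c j * x ^ j) (f x)) (hcs : Summable fun j => |c j| * a ^ j)
    (hν0 : 0 < ν) (hν1 : ν < 1) (hε : 0 < ε) (hεa : ε < a) (p : ℕ) :
    HasSum (fun j : ℕ => c j * ((a ^ ((j : ℝ) + 1 - p - ν) - ε ^ ((j : ℝ) + 1 - p - ν)) /
        ((j : ℝ) + 1 - p - ν)))
      (∫ x in ε..a, f x / x ^ ((p : ℝ) + ν)) := by
  have key := intervalIntegral.hasSum_integral_of_dominated_convergence (μ := volume) (a := ε)
    (b := a) (F := fun (j : ℕ) x => c j * (x ^ j / x ^ ((p : ℝ) + ν)))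
    (f := fun x => f x / x ^ ((p : ℝ) + ν))
    (fun j _ => |c j| * a ^ j / ε ^ ((p : ℝ) + ν)) ?_ ?_ ?_ ?_ ?_
  · refine key.congr_fun fun j => ?_
    rw [intervalIntegral.integral_const_mul]
    congr 1
    have h0 : (0 : ℝ) ∉ uIcc ε a := by
      rw [uIcc_of_le hεa.le]
      exact fun h => absurd h.1 (not_le.2 hε)
    have hne := exponent_ne_zero hν0 hν1 j p
    rw [intervalIntegral.integral_congr (g := fun x => x ^ ((j : ℝ) - (p + ν)))]
    · rw [integral_rpow (Or.inr ⟨fun h => hne (by linarith), h0⟩),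
        show (j : ℝ) - (p + ν) + 1 = j + 1 - p - ν by ring]
    · intro x hx
      rw [uIcc_of_le hεa.le] at hx
      dsimp only
      rw [Real.rpow_sub (hε.trans_le hx.1), Real.rpow_natCast]
  · intro j
    exact Measurable.aestronglyMeasurable (by fun_prop)
  · intro j
    refine ae_of_all _ fun x hx => ?_
    rw [uIoc_of_le hεa.le] at hx
    have hx0 : 0 < x := hε.trans hx.1
    have ha0 : 0 < a := hε.trans hεa
    rw [norm_mul, Real.norm_eq_abs, Real.norm_of_nonneg (by positivity), mul_div_assoc]
    gcongr
    · exact hx.2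
    · exact hx.1.le
  · exact ae_of_all _ fun x _ => hcs.div_const _
  · exact intervalIntegrable_const
  · refine ae_of_all _ fun x _ => ?_
    refine ((hf x).div_const _).congr_fun fun j => ?_
    rw [mul_div_assoc]

theorem tendsto_finitePart {f : ℝ → ℝ} {c : ℕ → ℝ} {ν a : ℝ}
    (hf : ∀ x, HasSum (fun j => c j * x ^ j) (f x)) (hcs : Summable fun j => |c j| * a ^ j)
    (hν0 : 0 < ν) (hν1 : ν < 1) (ha : 0 < a) (p : ℕ) :
    Tendsto (fun ε : ℝ => (∫ x in ε..a, f x / x ^ ((p : ℝ) + ν)) -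
        ∑ j ∈ Finset.range p, c j * ε ^ ((j : ℝ) + 1 - p - ν) / ((p : ℝ) + ν - j - 1))
      (nhdsWithin 0 (Ioi 0))
      (nhds (∑' j : ℕ, c j * (a ^ ((j : ℝ) + 1 - p - ν) / ((j : ℝ) + 1 - p - ν)))) := by
  have hpos : ∀ j : ℕ, ¬ j < p → 0 < (j : ℝ) + 1 - p - ν := by
    intro j hj
    have : (p : ℝ) ≤ j := by exact_mod_cast not_lt.1 hj
    linarith
  have hev : ∀ᶠ ε : ℝ in nhdsWithin 0 (Ioi 0), ε ∈ Ioo 0 a := Ioo_mem_nhdsGT ha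
  have hlim : Tendsto (fun ε : ℝ => ∑' j : ℕ, c j * ((a ^ ((j : ℝ) + 1 - p - ν) -
        if j < p then 0 else ε ^ ((j : ℝ) + 1 - p - ν)) / ((j : ℝ) + 1 - p - ν)))
      (nhdsWithin 0 (Ioi 0))
      (nhds (∑' j : ℕ, c j * (a ^ ((j : ℝ) + 1 - p - ν) / ((j : ℝ) + 1 - p - ν)))) := by
    refine tendsto_tsum_of_dominated_convergence
      (hcs.mul_right (a ^ (1 - (p : ℝ) - ν) / min ν (1 - ν))) (fun j => ?_) ?_
    · split_ifs with hj
      · simp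
      · have h0 : Tendsto (fun ε : ℝ => ε ^ ((j : ℝ) + 1 - p - ν)) (nhdsWithin 0 (Ioi 0))
            (nhds 0) := by
          have := (Real.continuousAt_rpow_const 0 _ (Or.inr (hpos j hj).le)).tendsto
          rw [Real.zero_rpow (hpos j hj).ne'] at this
          exact this.mono_left nhdsWithin_le_nhds
        simpa using (((tendsto_const_nhds (x := a ^ ((j : ℝ) + 1 - p - ν))).sub h0).div_const
          ((j : ℝ) + 1 - p - ν)).const_mul (c j)
    · filter_upwards [hev] with ε hε j
      have hε0 : 0 < ε := hε.1
      refine abs_finitePart_term_le hν0 hν1 ha _ j p ?_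
      split_ifs with hj
      · rw [sub_zero, abs_of_nonneg (by positivity)]
      · have h1 : ε ^ ((j : ℝ) + 1 - p - ν) ≤ a ^ ((j : ℝ) + 1 - p - ν) :=
          Real.rpow_le_rpow hε0.le hε.2.le (hpos j hj).le
        rw [abs_of_nonneg (by linarith)]
        linarith [Real.rpow_nonneg hε0.le ((j : ℝ) + 1 - p - ν)]
  refine hlim.congr' ?_
  filter_upwards [hev] with ε hε
  have h1 := hasSum_integral_div_rpow hf hcs hν0 hν1 hε.1 hε.2 p
  have h2 := hasSum_sum_of_ne_finset_zero (L := .unconditional ℕ) (s := Finset.range p)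
    (f := fun j : ℕ => if j < p then
      c j * ε ^ ((j : ℝ) + 1 - p - ν) / ((p : ℝ) + ν - j - 1) else 0) fun j hj => by
        rw [if_neg (by simpa using hj)]
  rw [Finset.sum_congr rfl fun j hj => if_pos (Finset.mem_range.1 hj)] at h2
  refine ((h1.sub h2).congr_fun fun j => ?_).tsum_eq
  split_ifs with hj
  · rw [show (p : ℝ) + ν - j - 1 = -((j : ℝ) + 1 - p - ν) by ring, div_neg]
    ring
  · ring

theorem hasSum_integral_rpow_neg_mul_div {f : ℝ → ℝ} {c : ℕ → ℝ} {ν ω a : ℝ}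
    (hf : ∀ x, HasSum (fun j => c j * x ^ j) (f x)) (hcs : Summable fun j => |c j| * a ^ j)
    (hν1 : ν < 1) (hω : 0 < ω) (ha : 0 < a) (n : ℕ) :
    HasSum (fun j : ℕ => c j * ∫ x in (0 : ℝ)..a, x ^ (-ν) * (x ^ j / (ω + x) ^ n))
      (∫ x in (0 : ℝ)..a, x ^ (-ν) * f x / (ω + x) ^ n) := by
  have key := intervalIntegral.hasSum_integral_of_dominated_convergence (μ := volume) (a := 0)
    (b := a) (F := fun (j : ℕ) x => c j * (x ^ (-ν) * (x ^ j / (ω + x) ^ n)))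
    (f := fun x => x ^ (-ν) * f x / (ω + x) ^ n)
    (fun j x => |c j| * a ^ j * (x ^ (-ν) / ω ^ n)) ?_ ?_ ?_ ?_ ?_
  · simpa only [intervalIntegral.integral_const_mul] using key
  · intro j
    exact Measurable.aestronglyMeasurable (by fun_prop)
  · intro j
    refine ae_of_all _ fun x hx => ?_
    rw [uIoc_of_le ha.le] at hx
    have hx0 : 0 < x := hx.1
    rw [norm_mul, Real.norm_eq_abs, Real.norm_of_nonneg (by positivity)]
    calc |c j| * (x ^ (-ν) * (x ^ j / (ω + x) ^ n)) = |c j| * x ^ j * (x ^ (-ν) / (ω + x) ^ n) := by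
          ring
      _ ≤ _ := by
          gcongr
          · exact hx.2
          · linarith
  · exact ae_of_all _ fun x _ => hcs.mul_right _
  · simp only [tsum_mul_right]
    exact ((intervalIntegral.intervalIntegrable_rpow' (by linarith)).div_const _).const_mul _
  · refine ae_of_all _ fun x _ => ?_
    refine (((hf x).mul_left (x ^ (-ν))).div_const ((ω + x) ^ n)).congr_fun fun j => ?_
    ring

theorem hasSum_iteratedDeriv_of_entire {F : ℂ → ℂ} (hF : Differentiable ℂ F) (m : ℕ) (z : ℂ) :
    HasSum (fun j : ℕ => iteratedDeriv j F 0 / j.factorial * (Nat.choose j m * z ^ (j - m)))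
      (iteratedDeriv m F z / m.factorial) := by
  have hd : Differentiable ℂ (iteratedDeriv m F) :=
    hF.contDiff.differentiable_iteratedDeriv m (WithTop.coe_lt_top _)
  have h := (Complex.hasSum_taylorSeries_of_entire hd 0 z).div_const (m.factorial : ℂ)
  rw [← hasSum_nat_add_iff' m, Finset.sum_eq_zero, sub_zero]
  · refine h.congr_fun fun i => ?_
    have hi : iteratedDeriv i (iteratedDeriv m F) 0 = iteratedDeriv (i + m) F 0 := by
      rw [iteratedDeriv_eq_iterate, iteratedDeriv_eq_iterate, iteratedDeriv_eq_iterate,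
        Function.iterate_add_apply]
    have h2 : (i.factorial : ℂ) ≠ 0 := by exact_mod_cast i.factorial_ne_zero
    have h3 : (m.factorial : ℂ) ≠ 0 := by exact_mod_cast m.factorial_ne_zero
    have h4 : ((Nat.choose (i + m) m : ℕ) : ℂ) * i.factorial * m.factorial =
        (i + m).factorial := by
      exact_mod_cast Nat.add_choose_mul_factorial_mul_factorial i m
    rw [hi, sub_zero, Nat.add_sub_cancel, ← h4]
    have h5 : ((Nat.choose (i + m) m : ℕ) : ℂ) ≠ 0 := by
      exact_mod_cast (Nat.choose_pos (Nat.le_add_left m i)).ne'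
    simp only [smul_eq_mul]
    field_simp
  · intro j hj
    rw [Nat.choose_eq_zero_of_lt (Finset.mem_range.1 hj)]
    simp

theorem hasSum_coeff_mul_branchTerm {F : ℂ → ℂ} {c : ℕ → ℝ} (hF : Differentiable ℂ F)
    (hc : ∀ j, (c j : ℂ) = iteratedDeriv j F 0 / (Nat.factorial j)) (ν ω : ℝ) (n : ℕ) :
    HasSum (fun j : ℕ => ((c j * branchTerm ν ω j n : ℝ) : ℂ))
      (((Real.pi / (Real.sin (Real.pi * ν) * ω ^ ν) : ℝ) : ℂ) *
          ∑ k ∈ Finset.range n,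
            iteratedDeriv (n - 1 - k) F (-(ω : ℂ)) *
              ((∏ i ∈ Finset.range k, (ν + (i : ℝ)) : ℝ) : ℂ) /
              ((Nat.factorial k : ℂ) * (Nat.factorial (n - 1 - k) : ℂ) * (ω : ℂ) ^ k)) := by
  have h := (hasSum_sum (s := Finset.range n) fun k _ =>
    (hasSum_iteratedDeriv_of_entire hF (n - 1 - k) (-(ω : ℂ))).mul_right
      (((∏ i ∈ Finset.range k, (ν + (i : ℝ)) : ℝ) : ℂ) / (k.factorial * (ω : ℂ) ^ k))).mul_left
    ((Real.pi / (Real.sin (Real.pi * ν) * ω ^ ν) : ℝ) : ℂ)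
  convert! h using 1
  · funext j
    rw [branchTerm, ← hc j]
    push_cast
    rw [mul_left_comm, Finset.mul_sum]
    congr 1
    refine Finset.sum_congr rfl fun k _ => ?_
    ring
  · congr 1
    refine Finset.sum_congr rfl fun k _ => ?_
    rw [div_mul_div_comm]
    congr 1
    ring

theorem summable_double_series {c : ℕ → ℝ} {ν ω a : ℝ} (hcs : Summable fun j => |c j| * a ^ j)
    (hν0 : 0 < ν) (hν1 : ν < 1) (hω : 0 < ω) (ha : ω < a) (n : ℕ) :
    Summable fun q : ℕ × ℕ => c q.1 * ((-1 : ℝ) ^ q.2 * (Nat.choose (n + q.2 - 1) q.2 : ℝ) *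
      ω ^ q.2 * (a ^ ((q.1 : ℝ) + 1 - (n + q.2 : ℕ) - ν) /
        ((q.1 : ℝ) + 1 - (n + q.2 : ℕ) - ν))) := by
  have ha0 : 0 < a := hω.trans ha
  have hδ : 0 < min ν (1 - ν) := lt_min hν0 (by linarith)
  have hs := (hcs.mul_of_nonneg (summable_choose_mul_pow n (r := ω / a) (by positivity)
    (by rwa [div_lt_one ha0])) (fun j => by positivity) (fun k => by positivity)).mul_right
      (a ^ (1 - (n : ℝ) - ν) / min ν (1 - ν))
  refine hs.of_norm_bounded fun q => ?_
  obtain ⟨j, k⟩ := q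
  have hb := abs_finitePart_term_le hν0 hν1 ha0 (c j) j (n + k)
    (t := a ^ ((j : ℝ) + 1 - (n + k : ℕ) - ν)) (by rw [abs_of_pos (by positivity)])
  rw [show 1 - ((n + k : ℕ) : ℝ) - ν = 1 - n - ν - k by push_cast; ring,
    Real.rpow_sub_natCast ha0.ne'] at hb
  dsimp only
  rw [mul_left_comm, norm_mul, Real.norm_eq_abs (c j * _), norm_mul, norm_mul, norm_pow, norm_neg,
    norm_one, one_pow, one_mul, Real.norm_of_nonneg (by positivity),
    Real.norm_of_nonneg (by positivity)]
  calc _ ≤ (Nat.choose (n + k - 1) k : ℝ) * ω ^ k *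
        (|c j| * a ^ j * (a ^ (1 - (n : ℝ) - ν) / a ^ k / min ν (1 - ν))) := by gcongr
    _ = _ := by rw [div_pow]; ring

/-- Finite-part integration of the incomplete generalized Stieltjes transform of
integral order `n` of `x^{-ν} f(x)`, `0 < ν < 1`:
`∫_0^a x^{-ν}f(x)/(ω+x)^n dx = Σ_k binom(-n,k) ω^k ⨍_0^a f/x^{n+k+ν}
+ (π/(sin(πν) ω^ν)) Σ_{k=0}^{n-1} F^{(n-1-k)}(-ω)(ν)_k/(k!(n-1-k)! ω^k)`. -/
theorem stmt_11 (f : ℝ → ℝ) (F : ℂ → ℂ) (c : ℕ → ℝ)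
    (hF : Differentiable ℂ F) (hFf : ∀ x : ℝ, F x = f x)
    (hc : ∀ j, (c j : ℂ) = iteratedDeriv j F 0 / (Nat.factorial j))
    (n : ℕ) (hn : 1 ≤ n) (ν : ℝ) (hν0 : 0 < ν) (hν1 : ν < 1)
    (ω a : ℝ) (hω : 0 < ω) (ha : ω < a) :
    ∃ fp : ℕ → ℝ, ∃ S : ℝ,
      (∀ k : ℕ,
        Tendsto
          (fun ε : ℝ =>
            (∫ x in ε..a, f x / x ^ (((n + k : ℕ) : ℝ) + ν)) -
              ∑ j ∈ Finset.range (n + k),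
                c j * ε ^ ((j : ℝ) + 1 - (n + k : ℕ) - ν) /
                  (((n + k : ℕ) : ℝ) + ν - j - 1))
          (nhdsWithin 0 (Set.Ioi 0)) (nhds (fp k))) ∧
      HasSum (fun k : ℕ =>
        (-1 : ℝ) ^ k * (Nat.choose (n + k - 1) k : ℝ) * ω ^ k * fp k) S ∧
      ((∫ x in (0 : ℝ)..a, x ^ (-ν) * f x / (ω + x) ^ n : ℝ) : ℂ) =
        (S : ℂ) + ((Real.pi / (Real.sin (Real.pi * ν) * ω ^ ν) : ℝ) : ℂ) *
          ∑ k ∈ Finset.range n,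
            iteratedDeriv (n - 1 - k) F (-(ω : ℂ)) *
              ((∏ i ∈ Finset.range k, (ν + (i : ℝ)) : ℝ) : ℂ) /
              ((Nat.factorial k : ℂ) * (Nat.factorial (n - 1 - k) : ℂ) * (ω : ℂ) ^ k) := by
  have ha0 : 0 < a := hω.trans ha
  have hf : ∀ x, HasSum (fun j => c j * x ^ j) (f x) := by
    intro x
    rw [← Complex.hasSum_ofReal, ← hFf]
    refine (Complex.hasSum_taylorSeries_of_entire hF 0 x).congr_fun fun j => ?_
    push_cast
    rw [hc, sub_zero, smul_eq_mul, smul_eq_mul]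
    ring
  have hcs : Summable fun j => |c j| * a ^ j := by
    refine (hf a).summable.abs.congr fun j => ?_
    rw [abs_mul, abs_of_pos (pow_pos ha0 j)]
  have hdouble := summable_double_series hcs hν0 hν1 hω ha n
  have hrow : HasSum (fun j => c j * ((∫ x in (0 : ℝ)..a, x ^ (-ν) * (x ^ j / (ω + x) ^ n)) -
      branchTerm ν ω j n)) _ :=
    hdouble.hasSum.prod_fiberwise fun j => (hasSum_moment hν0 hν1 hω ha j n).mul_left (c j)
  have hswap := (Equiv.prodComm ℕ ℕ).hasSum_iff.2 hdouble.hasSum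
  refine ⟨fun k => ∑' j : ℕ, c j * (a ^ ((j : ℝ) + 1 - (n + k : ℕ) - ν) /
    ((j : ℝ) + 1 - (n + k : ℕ) - ν)), _,
    fun k => tendsto_finitePart hf hcs hν0 hν1 ha0 (n + k),
    hswap.prod_fiberwise fun k => ?_, ?_⟩
  · have := (hswap.summable.prod_factor k).hasSum
    rw [← tsum_mul_left]
    convert! this using 1
    refine tsum_congr fun j => ?_
    simp only [Function.comp_apply, Equiv.prodComm_apply, Prod.swap_prod_mk]
    ring
  · have hI := hasSum_integral_rpow_neg_mul_div hf hcs hν1 hω ha0 n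
    rw [← sub_eq_iff_eq_add']
    refine HasSum.unique ?_ (hasSum_coeff_mul_branchTerm hF hc ν ω n)
    rw [← Complex.ofReal_sub, Complex.hasSum_ofReal]
    refine (hI.sub hrow).congr_fun fun j => ?_
    ring
end

section
/- Let r, s, n be positive integers with r + 1 < s < n + 1 and let ζ > 1. Then ∫_0^1 x^{r-1} (1-x)^{s-r-1}/(ζ^{-1} + x)^n dx = Σ_{k=0}^{∞} binom(-n, k) ζ^{-k} Σ_{l=0}^{s-r-1} (s-r-1)! (-1)^l/(l! (s-r-1-l)! (l+r-k-n)) + ζ^{n+1-s} (-1)^{r-1} (ζ+1)^{s-r-1} Σ_{k=0}^{n-2} Σ_{l=0}^{k} (r-1)! (s-r-1)! (-1)^k (ζ+1)^{-l}/(l! (k-l)! (r+l-k-1)! (s-r-l-1)! (n-1-k)), where in the double sum any term whose factorial has a negative argument is set to zero, and the infinite series converges. -/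
open Filter MeasureTheory Set

lemma hasDerivAt_neg_inv_shifted_pow {a x : ℝ} (hx : 0 < a + x) (p : ℕ) :
    HasDerivAt (fun x : ℝ => -(1 / (((p : ℝ) + 1) * (a + x) ^ (p + 1))))
      (1 / (a + x) ^ (p + 2)) x := by
  have h := ((((hasDerivAt_id x).const_add a).pow (p + 1)).const_mul ((p : ℝ) + 1)).fun_inv
    (by simpa using ⟨by positivity, hx.ne'⟩) |>.neg
  convert! h using 1
  · ext y; simp
  · simp only [id]
    push_cast
    field_simp
    simp only [Pi.pow_apply]
    ring

lemma tendsto_neg_inv_shifted_pow (a : ℝ) (p : ℕ) :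
    Tendsto (fun x : ℝ => -(1 / (((p : ℝ) + 1) * (a + x) ^ (p + 1)))) atTop (nhds 0) := by
  rw [← neg_zero]
  refine Tendsto.neg (tendsto_const_nhds.div_atTop ?_)
  refine Tendsto.const_mul_atTop (by positivity) ?_
  exact (tendsto_pow_atTop (by omega)).comp (tendsto_atTop_add_const_left _ a tendsto_id)

lemma integrableOn_Ioi_inv_shifted_pow {a c : ℝ} (h : 0 < a + c) (p : ℕ) :
    IntegrableOn (fun x : ℝ => 1 / (a + x) ^ (p + 2)) (Ioi c) := by
  refine integrableOn_Ioi_deriv_of_nonneg'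
    (fun x hx => hasDerivAt_neg_inv_shifted_pow ?_ p) (fun x hx => ?_)
    (tendsto_neg_inv_shifted_pow a p)
  · rw [mem_Ici] at hx; linarith
  · rw [mem_Ioi] at hx
    have : 0 < a + x := by linarith
    positivity

lemma integral_Ioi_inv_shifted_pow {a c : ℝ} (h : 0 < a + c) (p : ℕ) :
    ∫ x in Ioi c, 1 / (a + x) ^ (p + 2) = 1 / (((p : ℝ) + 1) * (a + c) ^ (p + 1)) := by
  rw [integral_Ioi_of_hasDerivAt_of_tendsto'
    (fun x hx => hasDerivAt_neg_inv_shifted_pow ?_ p) (integrableOn_Ioi_inv_shifted_pow h p)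
    (tendsto_neg_inv_shifted_pow a p)]
  · simp
  · rw [mem_Ici] at hx; linarith

lemma hasSum_one_div_add_pow {a x : ℝ} (ha : 0 ≤ a) (hx : a < x) (N : ℕ) :
    HasSum (fun k : ℕ => (-1 : ℝ) ^ k * ((N + k).choose k : ℝ) * a ^ k / x ^ (N + 1 + k))
      (1 / (a + x) ^ (N + 1)) := by
  have hx0 : 0 < x := ha.trans_lt hx
  have hn : ‖-(a / x)‖ < 1 := by
    rw [norm_neg, Real.norm_of_nonneg (by positivity), div_lt_one hx0]; exact hx
  convert! (hasSum_choose_mul_geometric_of_norm_lt_one N hn).mul_left (1 / x ^ (N + 1)) using 1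
  · ext k
    rw [neg_pow (a / x), div_pow, add_comm N k, Nat.choose_symm_add, pow_add x]
    field_simp
  · rw [one_div_mul_one_div, ← mul_pow]
    congr 2
    field_simp
    ring

lemma hasSum_integral_Ioi_one_pow_div_add_pow {a : ℝ} (ha : 0 ≤ a) (ha1 : a < 1) (m p : ℕ) :
    HasSum (fun k : ℕ => (-1 : ℝ) ^ k * ((m + p + 1 + k).choose k : ℝ) * a ^ k *
        (1 / ((p : ℝ) + k + 1)))
      (∫ x in Ioi (1 : ℝ), x ^ m / (a + x) ^ (m + p + 2)) := by
  set F : ℕ → ℝ → ℝ := fun k x =>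
    (-1 : ℝ) ^ k * ((m + p + 1 + k).choose k : ℝ) * a ^ k * (1 / (0 + x) ^ (p + k + 2)) with hF
  have hint (k : ℕ) : ∫ x in Ioi (1 : ℝ), 1 / (0 + x) ^ (p + k + 2) = 1 / ((p : ℝ) + k + 1) := by
    rw [integral_Ioi_inv_shifted_pow (by norm_num)]
    simp
  have hFi (k : ℕ) : IntegrableOn (F k) (Ioi 1) :=
    (integrableOn_Ioi_inv_shifted_pow (by norm_num) _).const_mul _
  have hnorm (k : ℕ) : ∫ x in Ioi (1 : ℝ), ‖F k x‖ =
      ((m + p + 1 + k).choose k : ℝ) * a ^ k * (1 / ((p : ℝ) + k + 1)) := by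
    rw [← hint, ← integral_const_mul]
    refine setIntegral_congr_fun measurableSet_Ioi fun x hx => ?_
    have hx0 : (0 : ℝ) < x := one_pos.trans hx
    simp only [hF, norm_mul, norm_pow, norm_neg, norm_one, one_pow, one_mul, RCLike.norm_natCast,
      Real.norm_of_nonneg ha]
    rw [Real.norm_of_nonneg (by positivity)]
  have hsum : Summable fun k => ∫ x in Ioi (1 : ℝ), ‖F k x‖ := by
    have hg : Summable fun k : ℕ => ((m + p + 1 + k).choose k : ℝ) * a ^ k := by
      convert! summable_choose_mul_geometric_of_norm_lt_one (R := ℝ) (r := a) (m + p + 1) ?_ using 1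
      · ext k
        rw [add_comm _ k, Nat.choose_symm_add]
      · rwa [Real.norm_of_nonneg ha]
    refine hg.of_nonneg_of_le (fun k => integral_nonneg fun x => norm_nonneg _) fun k => ?_
    rw [hnorm]
    refine mul_le_of_le_one_right (by positivity) ?_
    rw [div_le_one (by positivity)]
    have : (0 : ℝ) ≤ (p : ℝ) + k := by positivity
    linarith
  have key := hasSum_integral_of_summable_integral_norm hFi hsum
  convert! key using 1
  · ext k
    rw [← hint, ← integral_const_mul]
  · refine setIntegral_congr_fun measurableSet_Ioi fun x hx => ?_
    have hx0 : (0 : ℝ) < x := one_pos.trans hx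
    have h := (hasSum_one_div_add_pow ha (ha1.trans hx) (m + p + 1)).mul_left (x ^ m)
    simp only [mul_one_div] at h
    rw [← h.tsum_eq]
    refine tsum_congr fun k => ?_
    simp only [hF, zero_add]
    rw [show m + p + 1 + 1 + k = m + (p + k + 2) by ring, pow_add x m]
    field_simp

/-- Expansion of the beta-type polynomial in powers of `a + x`. -/
lemma pow_mul_one_sub_pow_div_eq_sum {a x : ℝ} (hx : 0 < a + x) {R S n : ℕ} (h : R + S + 2 ≤ n) :
    x ^ R * (1 - x) ^ S / (a + x) ^ n =
      ∑ l ∈ Finset.range (S + 1), ∑ i ∈ Finset.range (R + 1),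
        ((-1) ^ l * (1 + a) ^ (S - l) * (S.choose l : ℝ) * ((-a) ^ (R - i) * (R.choose i : ℝ))) *
          (1 / (a + x) ^ (n - 2 - (i + l) + 2)) := by
  have h1 : x ^ R = ∑ i ∈ Finset.range (R + 1), (a + x) ^ i * (-a) ^ (R - i) * (R.choose i : ℝ) := by
    rw [← add_pow]; congr 1; ring
  have h2 : (1 - x) ^ S = ∑ l ∈ Finset.range (S + 1),
      (-(a + x)) ^ l * (1 + a) ^ (S - l) * (S.choose l : ℝ) := by
    rw [← add_pow]; congr 1; ring
  rw [h1, h2, mul_comm, Finset.sum_mul_sum, Finset.sum_div]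
  refine Finset.sum_congr rfl fun l hl => ?_
  rw [Finset.sum_div]
  refine Finset.sum_congr rfl fun i hi => ?_
  rw [Finset.mem_range] at hl hi
  obtain ⟨q, rfl⟩ : ∃ q, n = i + l + (q + 2) := ⟨n - (i + l) - 2, by omega⟩
  rw [show i + l + (q + 2) - 2 - (i + l) + 2 = q + 2 by omega, neg_pow, pow_add _ (i + l),
    pow_add _ i]
  field_simp

lemma integrableOn_Ioi_zero_pow_mul_one_sub_pow_div {a : ℝ} (ha : 0 < a) {R S n : ℕ}
    (h : R + S + 2 ≤ n) :
    IntegrableOn (fun x : ℝ => x ^ R * (1 - x) ^ S / (a + x) ^ n) (Ioi 0) := by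
  refine IntegrableOn.congr_fun ?_
    (fun x (hx : 0 < x) => (pow_mul_one_sub_pow_div_eq_sum (add_pos ha hx) h).symm)
    measurableSet_Ioi
  exact integrable_finsetSum _ fun l _ => integrable_finsetSum _ fun i _ =>
    (integrableOn_Ioi_inv_shifted_pow (by simpa) _).const_mul _

lemma integral_Ioi_zero_pow_mul_one_sub_pow_div {a : ℝ} (ha : 0 < a) {R S n : ℕ}
    (h : R + S + 2 ≤ n) :
    ∫ x in Ioi (0 : ℝ), x ^ R * (1 - x) ^ S / (a + x) ^ n =
      ∑ l ∈ Finset.range (S + 1), ∑ i ∈ Finset.range (R + 1),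
        ((-1) ^ l * (1 + a) ^ (S - l) * (S.choose l : ℝ) * ((-a) ^ (R - i) * (R.choose i : ℝ))) *
          (1 / ((n - 1 - (i + l) : ℕ) * a ^ (n - 1 - (i + l)))) := by
  rw [setIntegral_congr_fun measurableSet_Ioi
    (fun x (hx : 0 < x) => pow_mul_one_sub_pow_div_eq_sum (add_pos ha hx) h)]
  have hi (q : ℕ) : IntegrableOn (fun x : ℝ => 1 / (a + x) ^ (q + 2)) (Ioi 0) :=
    integrableOn_Ioi_inv_shifted_pow (by simpa) _
  rw [integral_finsetSum _ fun l _ => integrable_finsetSum _ fun i _ => (hi _).const_mul _]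
  refine Finset.sum_congr rfl fun l hl => ?_
  rw [integral_finsetSum _ fun i _ => (hi _).const_mul _]
  refine Finset.sum_congr rfl fun i hi => ?_
  rw [Finset.mem_range] at hl hi
  rw [integral_const_mul, integral_Ioi_inv_shifted_pow (by simpa), add_zero,
    show n - 1 - (i + l) = n - 2 - (i + l) + 1 by omega]
  push_cast
  rfl

lemma hasSum_neg_integral_Ioi_one_pow_mul_one_sub_pow_div {a : ℝ} (ha : 0 < a) (ha1 : a < 1)
    {R S n : ℕ} (h : R + S + 2 ≤ n) :
    HasSum (fun k : ℕ => (-1 : ℝ) ^ k * ((n + k - 1).choose k : ℝ) * a ^ k *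
        ∑ l ∈ Finset.range (S + 1), (S.choose l : ℝ) * (-1) ^ l / ((l : ℝ) + (R + 1) - k - n))
      (-∫ x in Ioi (1 : ℝ), x ^ R * (1 - x) ^ S / (a + x) ^ n) := by
  have hexp (x : ℝ) : x ^ R * (1 - x) ^ S / (a + x) ^ n = ∑ l ∈ Finset.range (S + 1),
      (S.choose l : ℝ) * (-1) ^ l * (x ^ (R + l) / (a + x) ^ n) := by
    rw [sub_eq_neg_add, add_pow, Finset.mul_sum, Finset.sum_div]
    refine Finset.sum_congr rfl fun l _ => ?_
    rw [neg_pow x, one_pow, pow_add]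
    ring
  have hint (l : ℕ) (hl : l ∈ Finset.range (S + 1)) :
      IntegrableOn (fun x : ℝ => x ^ (R + l) / (a + x) ^ n) (Ioi 1) := by
    rw [Finset.mem_range] at hl
    have := integrableOn_Ioi_zero_pow_mul_one_sub_pow_div ha (R := R + l) (S := 0) (n := n)
      (by omega)
    simp only [pow_zero, mul_one] at this
    exact this.mono_set (Ioi_subset_Ioi zero_le_one)
  simp_rw [hexp]
  rw [integral_finsetSum _ fun l hl => (hint l hl).const_mul _, ← Finset.sum_neg_distrib]
  simp_rw [Finset.mul_sum, integral_const_mul]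
  refine hasSum_sum fun l hl => ?_
  rw [Finset.mem_range] at hl
  obtain ⟨p, rfl⟩ : ∃ p, n = R + l + p + 2 := ⟨n - (R + l) - 2, by omega⟩
  have key := (hasSum_integral_Ioi_one_pow_div_add_pow ha.le ha1 (R + l) p).mul_left
    (-((S.choose l : ℝ) * (-1) ^ l))
  rw [neg_mul] at key
  convert! key using 1
  ext k
  rw [show R + l + p + 2 + k - 1 = R + l + p + 1 + k by omega]
  push_cast
  rw [show (l : ℝ) + (R + 1) - k - (R + l + p + 2) = -((p : ℝ) + k + 1) by ring]
  have : (p : ℝ) + k + 1 ≠ 0 := by positivity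
  field_simp

lemma inv_factorial_mul_Gamma_sub_eq_choose (m i : ℕ) :
    (m.factorial : ℝ) / ((i.factorial : ℝ) * Real.Gamma ((m : ℝ) + 1 - i)) = (m.choose i : ℝ) := by
  rcases le_or_gt i m with h | h
  · rw [show (m : ℝ) + 1 - i = ((m - i : ℕ) : ℝ) + 1 by push_cast [h]; ring,
      Real.Gamma_nat_eq_factorial, Nat.cast_choose ℝ h]
  · rw [show (m : ℝ) + 1 - i = -((i - m - 1 : ℕ) : ℝ) by
        rw [Nat.sub_sub, Nat.cast_sub h]; push_cast; ring,
      Real.Gamma_neg_nat_eq_zero, Nat.choose_eq_zero_of_lt h]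
    simp

lemma sum_range_sum_choose_mul_choose {R S N : ℕ} (h : R + S + 1 ≤ N) (g : ℕ → ℕ → ℝ) :
    ∑ k ∈ Finset.range N, ∑ l ∈ Finset.range (k + 1),
        (S.choose l : ℝ) * (R.choose (k - l) : ℝ) * g l (k - l) =
      ∑ l ∈ Finset.range (S + 1), ∑ i ∈ Finset.range (R + 1),
        (S.choose l : ℝ) * (R.choose i : ℝ) * g l i := by
  rw [Finset.sum_range_diag_flip N fun l i => (S.choose l : ℝ) * (R.choose i : ℝ) * g l i]
  symm
  rw [← Finset.sum_subset (Finset.range_mono (show S + 1 ≤ N by omega))]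
  · refine Finset.sum_congr rfl fun l hl => ?_
    rw [Finset.mem_range] at hl
    refine Finset.sum_subset (Finset.range_mono (by omega)) fun i _ hi => ?_
    rw [Finset.mem_range, not_lt] at hi
    rw [Nat.choose_eq_zero_of_lt (show R < i by omega)]
    simp
  · intro l _ hl
    rw [Finset.mem_range, not_lt] at hl
    refine Finset.sum_eq_zero fun i _ => ?_
    rw [Nat.choose_eq_zero_of_lt (show S < l by omega)]
    simp

/-- Series representation of the Euler integral of the Gauss hypergeometric function
`₂F₁(n, r; s; -ζ)` for positive integers `r + 1 < s < n + 1` and `ζ > 1`.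
Factorials of possibly-negative integer arguments `(r+l-k-1)!` and `(s-r-l-1)!` are
written as `Γ(r+l-k)` and `Γ(s-r-l)`; Mathlib's `Real.Gamma` vanishes at nonpositive
integers, so the corresponding terms are zero, as required. -/
theorem stmt_16 (r s n : ℕ) (hr : 1 ≤ r) (hrs : r + 1 < s) (hsn : s < n + 1)
    (ζ : ℝ) (hζ : 1 < ζ) :
    ∃ A : ℝ,
      HasSum (fun k : ℕ =>
        (-1 : ℝ) ^ k * (Nat.choose (n + k - 1) k : ℝ) * ζ⁻¹ ^ k *
          ∑ l ∈ Finset.range (s - r),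
            (Nat.factorial (s - r - 1) : ℝ) * (-1 : ℝ) ^ l /
              ((Nat.factorial l : ℝ) * (Nat.factorial (s - r - 1 - l) : ℝ) *
                ((l : ℝ) + r - k - n))) A ∧
      (∫ x in (0 : ℝ)..1, x ^ (r - 1) * (1 - x) ^ (s - r - 1) / (ζ⁻¹ + x) ^ n) =
        A + ζ ^ (n + 1 - s) * (-1 : ℝ) ^ (r - 1) * (ζ + 1) ^ (s - r - 1) *
          ∑ k ∈ Finset.range (n - 1), ∑ l ∈ Finset.range (k + 1),
            (Nat.factorial (r - 1) : ℝ) * (Nat.factorial (s - r - 1) : ℝ) *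
              (-1 : ℝ) ^ k /
              ((ζ + 1) ^ l * (Nat.factorial l : ℝ) * (Nat.factorial (k - l) : ℝ) *
                Real.Gamma ((r : ℝ) + l - k) * Real.Gamma ((s : ℝ) - r - l) *
                ((n - 1 - k : ℕ) : ℝ)) := by
  obtain ⟨R, rfl⟩ : ∃ R, r = R + 1 := ⟨r - 1, by omega⟩
  obtain ⟨S, rfl⟩ : ∃ S, s = R + 1 + S + 1 := ⟨s - (R + 1) - 1, by omega⟩
  have hn : R + S + 2 ≤ n := by omega
  have hζ0 : 0 < ζ := one_pos.trans hζ
  have ha : 0 < ζ⁻¹ := inv_pos.mpr hζ0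
  rw [show R + 1 + S + 1 - (R + 1) = S + 1 by omega, Nat.add_sub_cancel, Nat.add_sub_cancel]
  refine ⟨-∫ x in Ioi (1 : ℝ), x ^ R * (1 - x) ^ S / (ζ⁻¹ + x) ^ n, ?_,
    eq_add_of_sub_eq' ?_⟩
  · convert! hasSum_neg_integral_Ioi_one_pow_mul_one_sub_pow_div ha (inv_lt_one_of_one_lt₀ hζ) hn
      using 1
    ext k
    congr 1
    refine Finset.sum_congr rfl fun l hl => ?_
    rw [Finset.mem_range] at hl
    rw [Nat.cast_choose ℝ (show l ≤ S by omega)]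
    push_cast
    rw [← div_div, mul_div_right_comm]
  · have hI := integrableOn_Ioi_zero_pow_mul_one_sub_pow_div ha hn
    rw [sub_neg_eq_add, intervalIntegral.integral_interval_add_Ioi hI
        (hI.mono_set (Ioi_subset_Ioi zero_le_one)),
      integral_Ioi_zero_pow_mul_one_sub_pow_div ha hn]
    have hterm : ∀ k ∈ Finset.range (n - 1), ∀ l ∈ Finset.range (k + 1),
        (Nat.factorial R : ℝ) * (Nat.factorial S : ℝ) * (-1 : ℝ) ^ k /
              ((ζ + 1) ^ l * (Nat.factorial l : ℝ) * (Nat.factorial (k - l) : ℝ) *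
                Real.Gamma (((R + 1 : ℕ) : ℝ) + l - k) *
                Real.Gamma (((R + 1 + S + 1 : ℕ) : ℝ) - (R + 1 : ℕ) - l) *
                ((n - 1 - k : ℕ) : ℝ)) =
          (S.choose l : ℝ) * (R.choose (k - l) : ℝ) *
            ((-1) ^ (k - l + l) / ((ζ + 1) ^ l * ((n - 1 - (k - l + l) : ℕ) : ℝ))) := by
      intro k _ l hl
      have hlk : l ≤ k := Nat.lt_succ_iff.mp (Finset.mem_range.mp hl)
      rw [← inv_factorial_mul_Gamma_sub_eq_choose, ← inv_factorial_mul_Gamma_sub_eq_choose,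
        Nat.sub_add_cancel hlk, Nat.cast_sub hlk]
      push_cast
      rw [show (R : ℝ) + 1 + l - k = R + 1 - (k - l) by ring,
        show (R : ℝ) + 1 + S + 1 - (R + 1) - l = S + 1 - l by ring]
      rw [div_mul_div_comm, div_mul_div_comm]
      congr 1 <;> ring
    rw [Finset.sum_congr rfl fun k hk => Finset.sum_congr rfl (hterm k hk),
      sum_range_sum_choose_mul_choose (by omega)
        fun l i => (-1) ^ (i + l) / ((ζ + 1) ^ l * ((n - 1 - (i + l) : ℕ) : ℝ)),
      Finset.mul_sum]
    refine Finset.sum_congr rfl fun l hl => ?_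
    rw [Finset.mul_sum]
    refine Finset.sum_congr rfl fun i hi => ?_
    rw [Finset.mem_range] at hl hi
    obtain ⟨u, rfl⟩ : ∃ u, S = l + u := ⟨S - l, by omega⟩
    obtain ⟨v, rfl⟩ : ∃ v, R = i + v := ⟨R - i, by omega⟩
    obtain ⟨q, rfl⟩ : ∃ q, n = i + v + (l + u) + 2 + q := ⟨_, (Nat.add_sub_cancel' hn).symm⟩
    rw [show i + v + (l + u) + 2 + q - 1 - (i + l) = v + u + q + 1 by omega,
      show i + v + (l + u) + 2 + q + 1 - (i + v + 1 + (l + u) + 1) = q + 1 by omega,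
      Nat.add_sub_cancel_left, Nat.add_sub_cancel_left, neg_pow ζ⁻¹,
      show 1 + ζ⁻¹ = (ζ + 1) / ζ by field_simp, div_pow, inv_pow, inv_pow]
    have hs : (-1 : ℝ) ^ v = (-1) ^ (i + v) * (-1) ^ i := by
      rw [← pow_add, show i + v + i = v + 2 * i by ring, pow_add, pow_mul]
      simp
    rw [hs]
    have hζ1 : ζ + 1 ≠ 0 := by positivity
    push_cast
    have hq : (v : ℝ) + u + q + 1 ≠ 0 := by positivity
    field_simp
    ring
end

section
/- Let n and s be positive integers with n ≥ s, and let ω > 0. Then ∫_0^∞ e^{-x} x^{s-1}/(ω + x)^n dx = ((-1)^{n-s}/(n-1)!) Σ_{k=0}^{∞} ((n+k-1)!/((k+n-s)! k!)) (H_{k+n-s} − γ) ω^k + (-1)^{n+s+1} (s-1)! e^{ω} ln ω Σ_{j=0}^{min(n-1, s-1)} ω^{s-1-j}/(j! (n-1-j)! (s-j-1)!) + (-1)^{s-1} (s-1)! e^{ω} Σ_{m=0}^{n-2} (ω^{s-n+m}/m!) Σ_{l=0}^{n-2-m} (-1)^{l+m}/(l! (s-l-1)! (n-1-l-m)), where H_j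 = Σ_{i=1}^{j} 1/i is the j-th harmonic number (H_0 = 0), γ is the Euler–Mascheroni constant, terms with a negative factorial argument are zero, empty sums are zero, and the infinite series converges. -/
open Filter MeasureTheory Set

/-! ### The Euler–Mascheroni constant and the exponential integral -/

lemma integrableOn_exp_neg_mul_log_and_integral :
    IntegrableOn (fun t : ℝ => Real.exp (-t) * Real.log t) (Ioi 0) ∧
      ∫ t in Ioi (0 : ℝ), Real.exp (-t) * Real.log t = -Real.eulerMascheroniConstant := by
  have hderiv := Complex.hasDerivAt_GammaIntegral (s := 1) (by simp)
  have hGamma : HasDerivAt Complex.GammaIntegral (-(Real.eulerMascheroniConstant : ℂ)) 1 := by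
    refine Complex.hasDerivAt_Gamma_one.congr_of_eventuallyEq ?_
    filter_upwards [(isOpen_lt continuous_const Complex.continuous_re).mem_nhds
      (show (0 : ℝ) < (1 : ℂ).re by simp)] with z hz
    exact (Complex.Gamma_eq_integral hz).symm
  have hint : ∫ t in Ioi (0 : ℝ), Real.exp (-t) * Real.log t
      = -Real.eulerMascheroniConstant := by
    have h := hderiv.unique hGamma
    have hcongr : ∀ t : ℝ, (t : ℂ) ^ ((1 : ℂ) - 1) * (Real.log t * Real.exp (-t))
        = ((Real.exp (-t) * Real.log t : ℝ) : ℂ) := by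
      intro t
      push_cast
      simp [mul_comm]
    simp_rw [hcongr] at h
    rw [integral_complex_ofReal] at h
    exact_mod_cast h
  refine ⟨?_, hint⟩
  by_contra hne
  rw [IntegrableOn] at hne
  rw [integral_undef hne] at hint
  linarith [Real.one_half_lt_eulerMascheroniConstant]

lemma tendsto_exp_neg_mul_log_atTop :
    Tendsto (fun t : ℝ => Real.exp (-t) * Real.log t) atTop (nhds 0) := by
  have h := Real.tendsto_pow_mul_exp_neg_atTop_nhds_zero 1
  refine squeeze_zero' ?_ ?_ h
  · filter_upwards [eventually_ge_atTop 1] with t ht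
    exact mul_nonneg (Real.exp_pos _).le (Real.log_nonneg ht)
  · filter_upwards [eventually_gt_atTop 0] with t ht
    rw [pow_one, mul_comm]
    gcongr
    exact Real.log_le_self ht.le

lemma integrableOn_exp_neg_mul_pow_div_pow (S N : ℕ) {ω : ℝ} (hω : 0 < ω) :
    IntegrableOn (fun x : ℝ => Real.exp (-x) * x ^ S / (ω + x) ^ N) (Ioi 0) := by
  have hG : IntegrableOn (fun x : ℝ => Real.exp (-x) * x ^ S) (Ioi 0) := by
    have h := Real.GammaIntegral_convergent (s := (S : ℝ) + 1) (by positivity)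
    simpa using h
  refine (hG.div_const (ω ^ N)).mono' ?_ ?_
  · refine ContinuousOn.aestronglyMeasurable (fun x hx => ?_) measurableSet_Ioi
    have hx : 0 < x := hx
    have : (ω + x) ^ N ≠ 0 := by positivity
    exact ContinuousAt.continuousWithinAt (by fun_prop (disch := assumption))
  · filter_upwards [self_mem_ae_restrict measurableSet_Ioi] with x hx
    have hx : 0 < x := hx
    rw [Real.norm_of_nonneg (by positivity)]
    gcongr
    linarith

lemma integral_exp_neg_div_add {ω : ℝ} (hω : 0 < ω) :
    ∫ x in Ioi (0 : ℝ), Real.exp (-x) / (ω + x)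
      = Real.exp ω * (-(Real.exp (-ω) * Real.log ω) - Real.eulerMascheroniConstant
          - ∫ t in (0 : ℝ)..ω, Real.exp (-t) * Real.log t) := by
  obtain ⟨hlog, hγ⟩ := integrableOn_exp_neg_mul_log_and_integral
  have hlogω : IntegrableOn (fun t : ℝ => Real.exp (-t) * Real.log t) (Ioi ω) :=
    hlog.mono_set (Ioi_subset_Ioi hω.le)
  have hsplit := intervalIntegral.integral_interval_add_Ioi hlog hlogω
  have hpre : (fun x : ℝ => x + ω) ⁻¹' Ioi ω = Ioi 0 := by simp
  have hcomp : ∀ x : ℝ, Real.exp (-x) / (ω + x)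
      = Real.exp ω * (Real.exp (-(x + ω)) / (x + ω)) := by
    intro x
    rw [mul_div_assoc', ← Real.exp_add, add_comm ω x]
    congr 2
    ring
  have hshift : ∫ x in Ioi (0 : ℝ), Real.exp (-(x + ω)) / (x + ω)
      = ∫ t in Ioi ω, Real.exp (-t) / t := by
    rw [← hpre]
    exact (measurePreserving_add_right volume ω).setIntegral_preimage_emb
      (measurableEmbedding_addRight ω) (fun t => Real.exp (-t) / t) (Ioi ω)
  have hint : IntegrableOn (fun t : ℝ => Real.exp (-t) / t) (Ioi ω) := by
    refine ((measurePreserving_add_right volume ω).integrableOn_comp_preimage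
      (measurableEmbedding_addRight ω)).1 ?_
    rw [hpre]
    have h := (integrableOn_exp_neg_mul_pow_div_pow 0 1 hω).const_mul (Real.exp (-ω))
    refine IntegrableOn.congr_fun h (fun x _ => ?_) measurableSet_Ioi
    simp only [pow_zero, mul_one, pow_one, hcomp x, Function.comp_apply, ← mul_assoc,
      ← Real.exp_add]
    simp
  have hparts : ∫ t in Ioi ω, (Real.exp (-t) / t - Real.exp (-t) * Real.log t)
      = 0 - Real.exp (-ω) * Real.log ω := by
    refine integral_Ioi_of_hasDerivAt_of_tendsto' (fun t ht => ?_) (hint.sub hlogω)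
      tendsto_exp_neg_mul_log_atTop
    have ht0 : t ≠ 0 := (hω.trans_le ht).ne'
    refine (((hasDerivAt_neg t).exp).mul (Real.hasDerivAt_log ht0)).congr_deriv ?_
    simp only [Pi.sub_apply]
    field_simp
    ring
  rw [integral_sub hint hlogω] at hparts
  simp_rw [hcomp]
  rw [integral_const_mul, hshift]
  congr 1
  linarith

/-! ### The exponential generating function of the harmonic numbers -/

lemma harmonic_le_two_pow (k : ℕ) : (harmonic k : ℝ) ≤ 2 ^ k := by
  have h : (harmonic k : ℝ) ≤ k := by
    induction k with
    | zero => simp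
    | succ k ih =>
      rw [harmonic_succ]
      push_cast
      have : ((k : ℝ) + 1)⁻¹ ≤ 1 := inv_le_one_of_one_le₀ (by linarith [k.cast_nonneg (α := ℝ)])
      linarith
  exact h.trans (by exact_mod_cast k.lt_two_pow_self.le)

lemma harmonic_cast_nonneg (k : ℕ) : (0 : ℝ) ≤ harmonic k := by
  rw [harmonic]
  push_cast
  positivity

lemma summable_harmonic_add_mul_pow_div_factorial (d : ℕ) (x : ℝ) :
    Summable fun k : ℕ => (harmonic (k + d) : ℝ) * x ^ k / k.factorial := by
  refine ((Real.summable_pow_div_factorial (2 * |x|)).mul_left (2 ^ d)).of_norm_bounded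
    fun k => ?_
  rw [norm_div, norm_mul, norm_pow, Real.norm_of_nonneg (harmonic_cast_nonneg _),
    Real.norm_natCast, mul_div_assoc', mul_pow, ← mul_assoc, ← pow_add, add_comm d k,
    Real.norm_eq_abs]
  gcongr
  exact harmonic_le_two_pow _

lemma hasSum_pow_div_factorial (x : ℝ) :
    HasSum (fun k : ℕ => x ^ k / k.factorial) (Real.exp x) := by
  rw [Real.exp_eq_exp_ℝ]
  exact NormedSpace.expSeries_div_hasSum_exp x

lemma hasDerivAt_tsum_harmonic (x : ℝ) :
    HasDerivAt (fun y : ℝ => ∑' k : ℕ, (harmonic k : ℝ) * y ^ k / k.factorial)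
      (∑' k : ℕ, (harmonic (k + 1) : ℝ) * x ^ k / k.factorial) x := by
  set R : ℝ := |x| + 1
  have hfac : ∀ (k : ℕ) (y : ℝ),
      (harmonic (k + 1) : ℝ) * (((k + 1 : ℕ) : ℝ) * y ^ (k + 1 - 1)) / (k + 1).factorial
        = (harmonic (k + 1) : ℝ) * y ^ k / k.factorial := by
    intro k y
    rw [Nat.factorial_succ]
    push_cast
    have := k.factorial_pos
    field_simp
  have hsum : ∀ y : ℝ,
      Summable fun k : ℕ => (harmonic k : ℝ) * ((k : ℝ) * y ^ (k - 1)) / k.factorial := by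
    intro y
    rw [← summable_nat_add_iff 1]
    simp_rw [hfac]
    exact summable_harmonic_add_mul_pow_div_factorial 1 y
  have h := hasDerivAt_tsum_of_isPreconnected (𝕜 := ℝ)
    (g := fun (k : ℕ) y => (harmonic k : ℝ) * y ^ k / k.factorial)
    (t := Ioo (-R) R) (y₀ := x) (y := x) (hsum R) isOpen_Ioo isPreconnected_Ioo
    (fun k y _ => ((hasDerivAt_pow k y).const_mul _).div_const _)
    (fun k y hy => ?_) (abs_lt.1 (by simp [R]))
    (summable_harmonic_add_mul_pow_div_factorial 0 x) (abs_lt.1 (by simp [R]))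
  · refine h.congr_deriv ?_
    rw [(hsum x).tsum_eq_zero_add]
    simp_rw [hfac]
    simp
  · rw [norm_div, norm_mul, norm_mul, norm_pow, Real.norm_of_nonneg (harmonic_cast_nonneg _),
      Real.norm_natCast, Real.norm_natCast]
    have : ‖y‖ ≤ R := (abs_lt.2 hy).le
    have := harmonic_cast_nonneg k
    gcongr

lemma hasSum_pow_div_factorial_succ {x : ℝ} (hx : x ≠ 0) :
    HasSum (fun k : ℕ => x ^ k / (k + 1).factorial) ((Real.exp x - 1) / x) := by
  have h := (hasSum_nat_add_iff' 1).2 (hasSum_pow_div_factorial x)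
  simp only [Finset.range_one, Finset.sum_singleton, pow_zero, Nat.factorial_zero, Nat.cast_one,
    div_one] at h
  refine (h.div_const x).congr_fun fun k => ?_
  rw [pow_succ]
  field_simp

lemma tsum_harmonic_succ {x : ℝ} (hx : x ≠ 0) :
    ∑' k : ℕ, (harmonic (k + 1) : ℝ) * x ^ k / k.factorial
      = ∑' k : ℕ, (harmonic k : ℝ) * x ^ k / k.factorial + (Real.exp x - 1) / x := by
  refine HasSum.tsum_eq ?_
  refine ((summable_harmonic_add_mul_pow_div_factorial 0 x).hasSum.add
    (hasSum_pow_div_factorial_succ hx)).congr_fun fun k => ?_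
  rw [harmonic_succ, Nat.factorial_succ, add_zero]
  have := k.factorial_pos
  push_cast
  field_simp

lemma continuousAt_one_sub_exp_neg_mul_log_zero :
    ContinuousAt (fun x : ℝ => (1 - Real.exp (-x)) * Real.log x) 0 := by
  have h1 : (fun x : ℝ => 1 - Real.exp (-x)) =O[nhds 0] fun x : ℝ => x := by
    have hd : HasDerivAt (fun x : ℝ => 1 - Real.exp (-x)) 1 0 :=
      (((hasDerivAt_neg (0 : ℝ)).exp).const_sub 1).congr_deriv (by simp)
    simpa using hd.isBigO_sub
  have h2 : Tendsto (fun x : ℝ => x * Real.log x) (nhds 0) (nhds 0) := by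
    simpa using Real.continuous_mul_log.tendsto 0
  have h3 := (h1.mul (Asymptotics.isBigO_refl Real.log (nhds 0))).trans_tendsto h2
  simpa [ContinuousAt] using h3

/-- The generating function of the harmonic numbers equals
`e^ω ∫_0^ω (1 - e^{-t}) / t dt`, here after an integration by parts. -/
lemma exp_neg_mul_tsum_harmonic {ω : ℝ} (hω : 0 < ω) :
    Real.exp (-ω) * ∑' k : ℕ, (harmonic k : ℝ) * ω ^ k / k.factorial
      = (1 - Real.exp (-ω)) * Real.log ω - ∫ t in (0 : ℝ)..ω, Real.exp (-t) * Real.log t := by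
  have hlog := integrableOn_exp_neg_mul_log_and_integral.1
  have hII : ∀ b : ℝ, 0 ≤ b →
      IntervalIntegrable (fun t : ℝ => Real.exp (-t) * Real.log t) volume 0 b := by
    intro b hb
    rw [intervalIntegrable_iff_integrableOn_Ioc_of_le hb]
    exact hlog.mono_set Ioc_subset_Ioi_self
  set G : ℝ → ℝ := fun x => ∑' k : ℕ, (harmonic k : ℝ) * x ^ k / k.factorial
  set Φ : ℝ → ℝ := fun x => Real.exp (-x) * G x - (1 - Real.exp (-x)) * Real.log x
    + ∫ t in (0 : ℝ)..x, Real.exp (-t) * Real.log t with hΦ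
  have hG : Continuous G :=
    continuous_iff_continuousAt.2 fun x => (hasDerivAt_tsum_harmonic x).continuousAt
  have hcont : ContinuousOn Φ (Icc 0 ω) := by
    refine ContinuousOn.add (ContinuousOn.sub (by fun_prop) fun x _ => ?_) ?_
    · refine ContinuousAt.continuousWithinAt ?_
      rcases eq_or_ne x 0 with rfl | hx
      · exact continuousAt_one_sub_exp_neg_mul_log_zero
      · exact ContinuousAt.mul (by fun_prop) (Real.continuousAt_log hx)
    · have h := intervalIntegral.continuousOn_primitive_interval' (hII ω hω.le) left_mem_uIcc
      rwa [uIcc_of_le hω.le] at h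
  have hder : ∀ x ∈ Ioo 0 ω, HasDerivAt Φ 0 x := by
    intro x hx
    have hx0 : x ≠ 0 := hx.1.ne'
    have hexp : HasDerivAt (fun y : ℝ => Real.exp (-y)) (Real.exp (-x) * -1) x :=
      (hasDerivAt_neg x).exp
    have hprim := intervalIntegral.integral_hasDerivAt_right (hII x hx.1.le)
      (Measurable.stronglyMeasurable (by fun_prop)).stronglyMeasurableAtFilter
      (ContinuousAt.mul (by fun_prop) (Real.continuousAt_log hx0))
    refine (((hexp.mul (hasDerivAt_tsum_harmonic x)).sub
      ((hexp.const_sub 1).mul (Real.hasDerivAt_log hx0))).add hprim).congr_deriv ?_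
    rw [tsum_harmonic_succ hx0]
    simp only [Real.exp_neg]
    field_simp
    ring
  obtain ⟨c, -, hc⟩ := exists_hasDerivAt_eq_slope Φ (fun _ => 0) hω hcont hder
  have hΦ0 : Φ 0 = 0 := by
    have : G 0 = 0 := by
      simp only [G]
      rw [tsum_eq_single 0 (fun k hk => by simp [hk])]
      simp
    simp [hΦ, this]
  have hΦω : Φ ω = 0 := by
    have h := (eq_div_iff (sub_pos.2 hω).ne').1 hc
    linarith
  simp only [hΦ] at hΦω
  linarith

/-! ### The integral and the three parts of its expansion, for `s = S + 1`, `n = S + d + 1` -/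

noncomputable section

/-- `∫_0^∞ e^{-x} x^S / (ω + x)^(S+d+1) dx`. -/
def kummerIntegral (S d : ℕ) (ω : ℝ) : ℝ :=
  ∫ x in Ioi (0 : ℝ), Real.exp (-x) * x ^ S / (ω + x) ^ (S + d + 1)

/-- The coefficient of `ω ^ k` in the power series part. -/
def seriesCoeff (S d k : ℕ) : ℝ :=
  (-1) ^ d / (S + d).factorial * ((S + d + k).factorial / ((k + d).factorial * k.factorial) *
    ((harmonic (k + d) : ℝ) - Real.eulerMascheroniConstant))

/-- The coefficient of `e^ω ln ω`. -/
def logCoeff (S d : ℕ) (ω : ℝ) : ℝ :=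
  (-1) ^ (d + 1) *
    ∑ i ∈ Finset.range (S + 1), (S.choose i : ℝ) * (ω ^ (S - i) / (d + (S - i)).factorial)

/-- The alternating binomial sums appearing in `laurentPart`. -/
def alternatingSum (S p : ℕ) : ℝ :=
  ∑ l ∈ Finset.range p, (-1) ^ l * (S.choose l : ℝ) / ((p - l : ℕ) : ℝ)

/-- The Laurent polynomial multiplying `e^ω`. -/
def laurentPart (S d : ℕ) (ω : ℝ) : ℝ :=
  (-1) ^ S * ∑ m ∈ Finset.range (S + d),
    (-1) ^ m * (ω ^ ((m : ℤ) - d) / m.factorial) * alternatingSum S (S + d - m)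

end

lemma kummerIntegral_succ (S d : ℕ) {ω : ℝ} (hω : 0 < ω) :
    kummerIntegral (S + 1) d ω = kummerIntegral S d ω - ω * kummerIntegral S (d + 1) ω := by
  simp only [kummerIntegral]
  rw [← integral_const_mul, ← integral_sub (integrableOn_exp_neg_mul_pow_div_pow S _ hω)
    ((integrableOn_exp_neg_mul_pow_div_pow S _ hω).const_mul ω)]
  refine setIntegral_congr_fun measurableSet_Ioi fun x hx => ?_
  have hx : 0 < x := hx
  have : ω + x ≠ 0 := by positivity
  rw [show S + 1 + d + 1 = S + d + 1 + 1 by ring, show S + (d + 1) + 1 = S + d + 1 + 1 by ring]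
  field_simp
  ring

lemma kummerIntegral_zero_succ (d : ℕ) {ω : ℝ} (hω : 0 < ω) :
    (d + 1) * kummerIntegral 0 (d + 1) ω = (ω ^ (d + 1))⁻¹ - kummerIntegral 0 d ω := by
  have h0 := integrableOn_exp_neg_mul_pow_div_pow 0 (0 + d + 1) hω
  have h1 := (integrableOn_exp_neg_mul_pow_div_pow 0 (0 + (d + 1) + 1) hω).const_mul ((d : ℝ) + 1)
  have h : ∫ x in Ioi (0 : ℝ), (Real.exp (-x) * x ^ 0 / (ω + x) ^ (0 + d + 1)
      + ((d : ℝ) + 1) * (Real.exp (-x) * x ^ 0 / (ω + x) ^ (0 + (d + 1) + 1)))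
      = 0 - -(Real.exp (-0) / (ω + 0) ^ (d + 1)) := by
    refine integral_Ioi_of_hasDerivAt_of_tendsto'
      (f := fun x => -(Real.exp (-x) / (ω + x) ^ (d + 1))) (fun x hx => ?_) (h0.add h1) ?_
    · have hx : 0 ≤ x := hx
      have hne : ω + x ≠ 0 := by positivity
      refine (((hasDerivAt_neg x).exp.div (((hasDerivAt_id x).const_add ω).pow (d + 1))
        (pow_ne_zero _ hne)).neg).congr_deriv ?_
      simp only [Pi.pow_apply, id_eq, zero_add, add_tsub_cancel_right, pow_zero]
      push_cast
      field_simp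
      ring
    · have hexp : Tendsto (fun x : ℝ => Real.exp (-x) / ω ^ (d + 1)) atTop (nhds 0) := by
        simpa using (Real.tendsto_exp_neg_atTop_nhds_zero).div_const (ω ^ (d + 1))
      rw [← neg_zero]
      refine (squeeze_zero' ?_ ?_ hexp).neg
      · filter_upwards [eventually_ge_atTop 0] with x hx
        positivity
      · filter_upwards [eventually_ge_atTop 0] with x hx
        gcongr
        linarith
  rw [integral_add h0 h1, integral_const_mul] at h
  simp only [kummerIntegral]
  simp only [neg_zero, Real.exp_zero, add_zero, zero_sub, neg_neg, one_div] at h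
  linarith

lemma seriesCoeff_succ_zero (S d : ℕ) : seriesCoeff (S + 1) d 0 = seriesCoeff S d 0 := by
  simp only [seriesCoeff, add_zero]
  have h1 := (S + d).factorial_ne_zero
  have h2 := (S + 1 + d).factorial_ne_zero
  field_simp

lemma seriesCoeff_succ_succ (S d k : ℕ) :
    seriesCoeff (S + 1) d (k + 1) = seriesCoeff S d (k + 1) - seriesCoeff S (d + 1) k := by
  simp only [seriesCoeff]
  rw [show S + 1 + d + (k + 1) = S + d + k + 1 + 1 by ring,
    show S + d + (k + 1) = S + d + k + 1 by ring, show S + (d + 1) + k = S + d + k + 1 by ring,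
    show S + 1 + d = S + d + 1 by ring, show S + (d + 1) = S + d + 1 by ring,
    show k + (d + 1) = k + 1 + d by ring, Nat.factorial_succ (S + d + k + 1),
    Nat.factorial_succ (S + d), Nat.factorial_succ k]
  have h1 := (S + d).factorial_ne_zero
  have h2 := (k + 1 + d).factorial_ne_zero
  have h3 := k.factorial_ne_zero
  push_cast
  field_simp
  ring

lemma seriesCoeff_zero_succ (d k : ℕ) :
    (d + 1) * seriesCoeff 0 (d + 1) k
      = -seriesCoeff 0 d k
        - (-1) ^ d / d.factorial * (1 / (k.factorial * ((k : ℝ) + d + 1))) := by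
  simp only [seriesCoeff, zero_add]
  rw [show d + 1 + k = k + d + 1 by ring, show k + (d + 1) = k + d + 1 by ring, add_comm d k,
    harmonic_succ, Nat.factorial_succ (k + d), Nat.factorial_succ d]
  have h1 := d.factorial_ne_zero
  have h2 := (k + d).factorial_ne_zero
  have h3 := k.factorial_ne_zero
  push_cast
  field_simp
  ring

lemma logCoeff_succ (S d : ℕ) (ω : ℝ) :
    logCoeff (S + 1) d ω = logCoeff S d ω - ω * logCoeff S (d + 1) ω := by
  simp only [logCoeff]
  rw [Finset.sum_choose_succ_mul (fun _ j => ω ^ j / ((d + j).factorial : ℝ)) S]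
  have h : ∑ i ∈ Finset.range (S + 1),
      (S.choose i : ℝ) * (ω ^ (S + 1 - i) / (d + (S + 1 - i)).factorial)
      = ω * ∑ i ∈ Finset.range (S + 1),
        (S.choose i : ℝ) * (ω ^ (S - i) / (d + 1 + (S - i)).factorial) := by
    rw [Finset.mul_sum]
    refine Finset.sum_congr rfl fun i hi => ?_
    have hi : i ≤ S := Finset.mem_range_succ_iff.1 hi
    rw [Nat.succ_sub hi, Nat.succ_eq_add_one, pow_succ,
      show d + (S - i + 1) = d + 1 + (S - i) by ring]
    ring
  rw [h]
  ring

lemma logCoeff_zero (d : ℕ) (ω : ℝ) : logCoeff 0 d ω = (-1) ^ (d + 1) / d.factorial := by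
  simp [logCoeff, div_eq_mul_inv]

lemma alternatingSum_succ_succ (S p : ℕ) :
    alternatingSum (S + 1) (p + 1) = alternatingSum S (p + 1) - alternatingSum S p := by
  simp only [alternatingSum, Finset.sum_range_succ' _ p, Nat.choose_succ_succ,
    Nat.choose_zero_right, Nat.add_sub_add_right]
  rw [add_sub_right_comm, ← Finset.sum_sub_distrib]
  congr 1
  refine Finset.sum_congr rfl fun l _ => ?_
  push_cast
  ring

lemma alternatingSum_zero_left (p : ℕ) (hp : 0 < p) : alternatingSum 0 p = 1 / p := by
  rw [alternatingSum, Finset.sum_eq_single 0]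
  · simp
  · intro l _ hl
    rw [Nat.choose_eq_zero_of_lt (Nat.pos_of_ne_zero hl)]
    simp
  · intro h
    exact absurd (Finset.mem_range.2 hp) h

lemma laurentPart_succ (S d : ℕ) {ω : ℝ} (hω : ω ≠ 0) :
    laurentPart (S + 1) d ω = laurentPart S d ω - ω * laurentPart S (d + 1) ω := by
  have h1 : laurentPart S d ω = (-1) ^ S * ∑ m ∈ Finset.range (S + d + 1),
      (-1) ^ m * (ω ^ ((m : ℤ) - d) / m.factorial) * alternatingSum S (S + d - m) := by
    rw [laurentPart, Finset.sum_range_succ]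
    simp [alternatingSum]
  rw [h1, laurentPart, laurentPart, show S + 1 + d = S + d + 1 by ring,
    show S + (d + 1) = S + d + 1 by ring, mul_left_comm ω, Finset.mul_sum _ _ ω, ← mul_sub,
    ← Finset.sum_sub_distrib, pow_succ, mul_assoc, neg_one_mul, ← Finset.sum_neg_distrib]
  congr 1
  refine Finset.sum_congr rfl fun m hm => ?_
  have hm : m ≤ S + d := Finset.mem_range_succ_iff.1 hm
  have hz : ω ^ ((m : ℤ) - d) = ω * ω ^ ((m : ℤ) - (d + 1 : ℕ)) := by
    rw [← zpow_one_add₀ hω]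
    congr 1
    push_cast
    ring
  rw [Nat.succ_sub hm, Nat.succ_eq_add_one, alternatingSum_succ_succ, hz]
  ring

lemma laurentPart_zero (d : ℕ) (ω : ℝ) :
    laurentPart 0 d ω
      = ∑ m ∈ Finset.range d, (-1) ^ m * (ω ^ ((m : ℤ) - d) / m.factorial) / ((d : ℝ) - m) := by
  simp only [laurentPart, pow_zero, one_mul, zero_add]
  refine Finset.sum_congr rfl fun m hm => ?_
  have hm : m < d := Finset.mem_range.1 hm
  rw [alternatingSum_zero_left _ (Nat.sub_pos_of_lt hm), Nat.cast_sub hm.le, mul_one_div]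

lemma laurentPart_zero_succ (d : ℕ) {ω : ℝ} (hω : ω ≠ 0) :
    (d + 1) * laurentPart 0 (d + 1) ω
      = -laurentPart 0 d ω
        + ∑ m ∈ Finset.range (d + 1), (-1) ^ m * ω ^ ((m : ℤ) - (d + 1 : ℕ)) / m.factorial := by
  have h : ∀ m ∈ Finset.range (d + 1), ((d : ℝ) + 1) *
      ((-1) ^ m * (ω ^ ((m : ℤ) - (d + 1 : ℕ)) / m.factorial) / (((d + 1 : ℕ) : ℝ) - m))
      = (-1) ^ m * ω ^ ((m : ℤ) - (d + 1 : ℕ)) / m.factorial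
        + m * ((-1) ^ m * (ω ^ ((m : ℤ) - (d + 1 : ℕ)) / m.factorial)
          / (((d + 1 : ℕ) : ℝ) - m)) := by
    intro m hm
    have hm : (m : ℝ) < (d + 1 : ℕ) := by exact_mod_cast Finset.mem_range.1 hm
    have := (sub_pos.2 hm).ne'
    have := m.factorial_ne_zero
    push_cast at *
    field_simp
    ring
  rw [laurentPart_zero, laurentPart_zero, Finset.mul_sum, Finset.sum_congr rfl h,
    Finset.sum_add_distrib, add_comm]
  congr 1
  rw [Finset.sum_range_succ', Nat.cast_zero, zero_mul, add_zero, ← Finset.sum_neg_distrib]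
  refine Finset.sum_congr rfl fun m _ => ?_
  rw [Nat.factorial_succ]
  have := m.factorial_ne_zero
  push_cast
  rw [add_sub_add_right_eq_sub, add_sub_add_right_eq_sub, pow_succ]
  field_simp

/-- Power series of the lower incomplete exponential integral `ω^{-d-1} ∫_0^ω t^d e^t dt`. -/
lemma hasSum_pow_div_factorial_mul_add (d : ℕ) {ω : ℝ} (hω : ω ≠ 0) :
    HasSum (fun k : ℕ => (-1) ^ d / d.factorial * (1 / (k.factorial * ((k : ℝ) + d + 1))) * ω ^ k)
      (Real.exp ω * ∑ m ∈ Finset.range (d + 1),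
        (-1) ^ m * ω ^ ((m : ℤ) - (d + 1 : ℕ)) / m.factorial - (ω ^ (d + 1))⁻¹) := by
  induction d with
  | zero =>
    convert! hasSum_pow_div_factorial_succ hω using 1
    · funext k
      rw [Nat.factorial_succ]
      have := k.factorial_ne_zero
      push_cast
      simp
      field_simp
    · simp
      field_simp
  | succ d ih =>
    set c : ℝ := (-1) ^ (d + 1) / (d + 1).factorial with hc
    have hV := (hasSum_nat_add_iff' 1).2 (((hasSum_pow_div_factorial ω).mul_left c).add ih)
    refine (hasSum_mul_left_iff hω).1 ?_
    convert! hV using 1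
    · funext k
      have := k.factorial_ne_zero
      have := d.factorial_ne_zero
      rw [hc, Nat.factorial_succ, Nat.factorial_succ]
      push_cast
      field_simp
      ring
    · have hz : ∀ m : ℕ, ω ^ ((m : ℤ) - (d + 1 : ℕ)) = ω * ω ^ ((m : ℤ) - (d + 1 + 1 : ℕ)) := by
        intro m
        rw [← zpow_one_add₀ hω]
        congr 1
        push_cast
        ring
      have hzero : ω * ω ^ (((d + 1 : ℕ) : ℤ) - (d + 1 + 1 : ℕ)) = 1 := by
        rw [← hz, sub_self, zpow_zero]
      have hinv : ω * (ω ^ (d + 1 + 1))⁻¹ = (ω ^ (d + 1))⁻¹ := by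
        field_simp
        ring
      have hfirst : c + (-1) ^ d / d.factorial * (1 / ((d : ℝ) + 1)) = 0 := by
        have := d.factorial_ne_zero
        rw [hc, Nat.factorial_succ]
        push_cast
        field_simp
        ring
      have hsum : ∑ m ∈ Finset.range (d + 1), (-1) ^ m * ω ^ ((m : ℤ) - (d + 1 : ℕ)) / m.factorial
          = ω * ∑ m ∈ Finset.range (d + 1),
            (-1) ^ m * ω ^ ((m : ℤ) - (d + 1 + 1 : ℕ)) / m.factorial := by
        rw [Finset.mul_sum]
        refine Finset.sum_congr rfl fun m _ => ?_
        rw [hz]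
        ring
      rw [Finset.sum_range_succ _ (d + 1), hsum, mul_sub, hinv]
      simp only [Finset.range_one, Finset.sum_singleton, pow_zero, Nat.factorial_zero,
        Nat.cast_one, Nat.cast_zero, div_one, mul_one, one_mul, zero_add]
      rw [hfirst]
      linear_combination Real.exp ω * c * hzero

lemma hasSum_seriesCoeff_zero_zero {ω : ℝ} (hω : 0 < ω) :
    HasSum (fun k => seriesCoeff 0 0 k * ω ^ k)
      (kummerIntegral 0 0 ω
        - Real.exp ω * (Real.log ω * logCoeff 0 0 ω + laurentPart 0 0 ω)) := by
  have hint : kummerIntegral 0 0 ω = ∫ x in Ioi (0 : ℝ), Real.exp (-x) / (ω + x) := by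
    simp [kummerIntegral]
  have hG := exp_neg_mul_tsum_harmonic hω
  have hsum := ((summable_harmonic_add_mul_pow_div_factorial 0 ω).hasSum.sub
    ((hasSum_pow_div_factorial ω).mul_left Real.eulerMascheroniConstant))
  convert! hsum using 1
  · funext k
    have := k.factorial_ne_zero
    simp only [seriesCoeff, add_zero, zero_add, pow_zero, Nat.factorial_zero, Nat.cast_one]
    field_simp
  · have hee : Real.exp ω * Real.exp (-ω) = 1 := by rw [← Real.exp_add]; simp
    have hG' := congrArg (Real.exp ω * ·) hG
    simp only [← mul_assoc, hee, one_mul, mul_sub, mul_one] at hG'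
    simp only [add_zero]
    rw [hint, integral_exp_neg_div_add hω, logCoeff_zero, laurentPart_zero, hG']
    simp only [mul_sub, mul_neg, ← mul_assoc, hee]
    simp
    ring

lemma hasSum_seriesCoeff_zero (d : ℕ) {ω : ℝ} (hω : 0 < ω) :
    HasSum (fun k => seriesCoeff 0 d k * ω ^ k)
      (kummerIntegral 0 d ω
        - Real.exp ω * (Real.log ω * logCoeff 0 d ω + laurentPart 0 d ω)) := by
  induction d with
  | zero => exact hasSum_seriesCoeff_zero_zero hω
  | succ d ih =>
    have hd : (d : ℝ) + 1 ≠ 0 := by positivity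
    refine (hasSum_mul_left_iff hd).1 ?_
    have hlog : ((d : ℝ) + 1) * logCoeff 0 (d + 1) ω = -logCoeff 0 d ω := by
      rw [logCoeff_zero, logCoeff_zero, Nat.factorial_succ]
      have := d.factorial_ne_zero
      push_cast
      field_simp
      ring
    convert! ih.neg.sub (hasSum_pow_div_factorial_mul_add d hω.ne') using 1
    · funext k
      rw [← mul_assoc, seriesCoeff_zero_succ]
      ring
    · linear_combination kummerIntegral_zero_succ d hω - Real.exp ω * Real.log ω * hlog
        - Real.exp ω * laurentPart_zero_succ d hω.ne'

theorem hasSum_seriesCoeff (S d : ℕ) {ω : ℝ} (hω : 0 < ω) :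
    HasSum (fun k => seriesCoeff S d k * ω ^ k)
      (kummerIntegral S d ω
        - Real.exp ω * (Real.log ω * logCoeff S d ω + laurentPart S d ω)) := by
  induction S generalizing d with
  | zero => exact hasSum_seriesCoeff_zero d hω
  | succ S ih =>
    have hshift := (hasSum_nat_add_iff' 1).2 (ih d)
    rw [← hasSum_nat_add_iff' 1]
    convert! hshift.sub ((ih (d + 1)).mul_left ω) using 1
    · funext k
      rw [seriesCoeff_succ_succ]
      ring
    · simp only [Finset.range_one, Finset.sum_singleton, seriesCoeff_succ_zero]
      rw [kummerIntegral_succ S d hω, logCoeff_succ, laurentPart_succ S d hω.ne']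
      ring

lemma factorial_div_factorial_mul_Gamma (S l : ℕ) :
    (S.factorial : ℝ) / (l.factorial * Real.Gamma ((S + 1 : ℕ) - l)) = S.choose l := by
  rcases le_or_gt l S with h | h
  · obtain ⟨r, rfl⟩ := Nat.exists_eq_add_of_le h
    rw [show (((l + r + 1 : ℕ) : ℝ) - l) = r + 1 by push_cast; ring,
      Real.Gamma_nat_eq_factorial, Nat.cast_choose ℝ h, Nat.add_sub_cancel_left]
  · obtain ⟨r, rfl⟩ := Nat.exists_eq_add_of_lt h
    rw [show (((S + 1 : ℕ) : ℝ) - (S + r + 1 : ℕ)) = -r by push_cast; ring,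
      Real.Gamma_neg_nat_eq_zero, Nat.choose_eq_zero_of_lt h]
    simp

/-- Series representation of `∫_0^∞ e^{-x} x^{s-1}/(ω+x)^n dx` (up to a factor, the
Kummer function `U(s, s+1−n, ω)`) for positive integers `n ≥ s` and `ω > 0`.
The digamma values are written via harmonic numbers, `ψ(j+1) = H_j − γ`; the factorial
`(s-l-1)!`, whose argument may be negative, is written as `Γ(s-l)` (which vanishes at
nonpositive integers, making those terms zero); `ω^{s-n+m}` is an integer power. -/
theorem stmt_17 (n s : ℕ) (hs : 1 ≤ s) (hns : s ≤ n) (ω : ℝ) (hω : 0 < ω) :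
    ∃ A : ℝ,
      HasSum (fun k : ℕ =>
        ((Nat.factorial (n + k - 1) : ℝ) /
            ((Nat.factorial (k + n - s) : ℝ) * (Nat.factorial k : ℝ))) *
          ((harmonic (k + n - s) : ℝ) - Real.eulerMascheroniConstant) * ω ^ k) A ∧
      (∫ x in Set.Ioi (0 : ℝ), Real.exp (-x) * x ^ (s - 1) / (ω + x) ^ n) =
        ((-1 : ℝ) ^ (n - s) / (Nat.factorial (n - 1) : ℝ)) * A +
        (-1 : ℝ) ^ (n + s + 1) * (Nat.factorial (s - 1) : ℝ) * Real.exp ω * Real.log ω *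
          (∑ j ∈ Finset.range (min (n - 1) (s - 1) + 1),
            ω ^ (s - 1 - j) /
              ((Nat.factorial j : ℝ) * (Nat.factorial (n - 1 - j) : ℝ) *
                (Nat.factorial (s - j - 1) : ℝ))) +
        (-1 : ℝ) ^ (s - 1) * (Nat.factorial (s - 1) : ℝ) * Real.exp ω *
          ∑ m ∈ Finset.range (n - 1),
            (ω ^ ((s : ℤ) - (n : ℤ) + (m : ℤ)) / (Nat.factorial m : ℝ)) *
              ∑ l ∈ Finset.range (n - 1 - m),
                (-1 : ℝ) ^ (l + m) /
                  ((Nat.factorial l : ℝ) * Real.Gamma ((s : ℝ) - l) *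
                    ((n - 1 - l - m : ℕ) : ℝ)) := by
  obtain ⟨S, rfl⟩ := Nat.exists_eq_add_of_le' hs
  obtain ⟨d, rfl⟩ := Nat.exists_eq_add_of_le hns
  have h := hasSum_seriesCoeff S d hω
  set V : ℝ := kummerIntegral S d ω
    - Real.exp ω * (Real.log ω * logCoeff S d ω + laurentPart S d ω) with hV
  have hS := S.factorial_ne_zero
  have hSd := (S + d).factorial_ne_zero
  have hsq : ((-1 : ℝ) ^ d) * (-1) ^ d = 1 := by rw [← mul_pow]; simp
  have hn : S + 1 + d - 1 = S + d := by omega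
  have hint : ∫ x in Ioi (0 : ℝ), Real.exp (-x) * x ^ (S + 1 - 1) / (ω + x) ^ (S + 1 + d)
      = kummerIntegral S d ω := by
    rw [kummerIntegral, Nat.add_sub_cancel, show S + 1 + d = S + d + 1 by ring]
  have hlog : (-1 : ℝ) ^ (S + 1 + d + (S + 1) + 1) * (S.factorial : ℝ) *
      ∑ j ∈ Finset.range (min (S + d) S + 1), ω ^ (S - j) /
        ((j.factorial : ℝ) * ((S + d - j).factorial : ℝ) * ((S + 1 - j - 1).factorial : ℝ))
      = logCoeff S d ω := by
    rw [logCoeff, min_eq_right (Nat.le_add_right S d),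
      show S + 1 + d + (S + 1) + 1 = 2 * (S + 1) + (d + 1) by ring, pow_add, pow_mul,
      neg_one_sq, one_pow, one_mul, mul_assoc, Finset.mul_sum]
    congr 1
    refine Finset.sum_congr rfl fun j hj => ?_
    have hj : j ≤ S := Finset.mem_range_succ_iff.1 hj
    rw [Nat.cast_choose ℝ hj, show S + d - j = d + (S - j) by omega,
      show S + 1 - j - 1 = S - j by omega]
    field_simp
  have hlaurent : (-1 : ℝ) ^ S * (S.factorial : ℝ) * ∑ m ∈ Finset.range (S + d),
      (ω ^ (((S + 1 : ℕ) : ℤ) - ((S + 1 + d : ℕ) : ℤ) + (m : ℤ)) / (m.factorial : ℝ)) *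
        ∑ l ∈ Finset.range (S + d - m), (-1 : ℝ) ^ (l + m) /
          ((l.factorial : ℝ) * Real.Gamma (((S + 1 : ℕ) : ℝ) - l) * ((S + d - l - m : ℕ) : ℝ))
      = laurentPart S d ω := by
    rw [laurentPart, mul_assoc, Finset.mul_sum]
    congr 1
    refine Finset.sum_congr rfl fun m _ => ?_
    rw [alternatingSum, show (((S + 1 : ℕ) : ℤ) - ((S + 1 + d : ℕ) : ℤ) + (m : ℤ)) = m - d by
      push_cast; ring, Finset.mul_sum, Finset.mul_sum, Finset.mul_sum]
    refine Finset.sum_congr rfl fun l _ => ?_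
    rw [← factorial_div_factorial_mul_Gamma, Nat.sub_right_comm (S + d) l m, pow_add]
    simp only [div_eq_mul_inv, mul_inv]
    ring
  refine ⟨(-1) ^ d * (S + d).factorial * V, ?_, ?_⟩
  · convert! h.mul_left ((-1) ^ d * ((S + d).factorial : ℝ)) using 1
    funext k
    rw [show S + 1 + d + k - 1 = S + d + k by omega,
      show k + (S + 1 + d) - (S + 1) = k + d by omega, seriesCoeff]
    simp only [← mul_assoc]
    rw [show (-1 : ℝ) ^ d * (S + d).factorial * ((-1) ^ d / (S + d).factorial) = 1 by
      field_simp
      linear_combination hsq, one_mul]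
  · rw [hint, hn, Nat.add_sub_cancel_left, Nat.add_sub_cancel]
    have hA : (-1 : ℝ) ^ d / (S + d).factorial * ((-1) ^ d * (S + d).factorial * V) = V := by
      field_simp
      linear_combination V * hsq
    rw [hA]
    linear_combination hV - Real.exp ω * Real.log ω * hlog - Real.exp ω * hlaurent
end
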